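/- arXiv:2107.11846 — 2 statements merged into one kernel-verified Lean document; each statement's English description precedes it below -/
import Mathlib

section
/- As t → ∞, the scaled random variables (E[R^γ]·t)^{−1/γ}·Y_t converge in distribution to a random variable S whose characteristic function is E[e^{iθS}] = exp( Q ∫_0^∞ (e^{iθu} − 1 − iθu) u^{−γ−1} du ) for all θ ∈ ℝ, i.e. a centered strictly γ-stable random variable with positive spectrum. -/
open MeasureTheory Filter Set
open scoped ENNReal NNReal Topology

noncomputable section

/-- `ℓ_t(s,u)`: the length of the interval `[s,s+u] ∩ [0,t]`. -/
def ellK (t s u : ℝ) : ℝ := max 0 (min (s + u) t - max s 0)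

/-- The intensity measure `u^{-γ-1} du` on `(0,∞)`. -/
def muU (γ : ℝ) : Measure ℝ :=
  (volume.restrict (Set.Ioi 0)).withDensity fun u => ENNReal.ofReal (u ^ (-γ - 1))

/-- The measure `μ^ℓ_t` on `(0,∞)`:
`μ^ℓ_t(A) = ∫_ℝ ∫_0^∞ 1{ℓ_t(s,u) ∈ A} u^{-γ-1} du ds`. -/
def muEll (γ t : ℝ) : Measure ℝ :=
  (Measure.map (fun p : ℝ × ℝ => ellK t p.1 p.2)
    ((volume : Measure ℝ).prod (muU γ))).restrict (Set.Ioi 0)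

/-- The measure `μ^{ℓ,r}_t` on `(0,∞)`:
`μ^{ℓ,r}_t(A) = ∫_{(0,∞)} ∫_{(0,∞)} 1{rℓ ∈ A} μ^ℓ_t(dℓ) F_R(dr)`. -/
def muEllR (γ t : ℝ) (FR : Measure ℝ) : Measure ℝ :=
  (Measure.map (fun p : ℝ × ℝ => p.1 * p.2) (FR.prod (muEll γ t))).restrict (Set.Ioi 0)

/-- The measure `ν` on `[0,1]`: density `s^{-(γ+1)} + ((2-γ)/γ)·s^{-γ}` on `(0,1)` with
respect to Lebesgue measure, together with an atom of mass `1/(γ(γ-1))` at the point `1`. -/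
def nuM (γ : ℝ) : Measure ℝ :=
  (volume.restrict (Set.Ioo 0 1)).withDensity
      (fun s => ENNReal.ofReal (s ^ (-(γ + 1)) + (2 - γ) / γ * s ^ (-γ)))
    + (Real.toNNReal (1 / (γ * (γ - 1)))) • Measure.dirac 1

instance nuM.sigmaFinite (γ : ℝ) : SigmaFinite (nuM γ) := by
  unfold nuM; infer_instance

end

/-!
Self-similarity of Lebesgue measure and of `u^{-γ-1} du` reduces the dependence on both the scaling
factor `k` and the time `t` to a single window length:
`∫ g(kℓ) μ^ℓ_t(dℓ) = k^γ t · (kt)⁻¹ ∫ g dμ^ℓ_{kt}`.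
As the window grows, intervals meeting its boundary become negligible, so that
`a⁻¹ ∫ g dμ^ℓ_a → ∫_0^∞ g(u) u^{-γ-1} du` whenever `‖g v‖ ≤ C min(v, v²)`. For
`k = r (m t)^{-1/γ}` with `m = E[R^γ]`, the weight `k^γ t = r^γ / m` has mean one under the law of
`R`, while `kt → ∞` because `γ > 1`. Hence the characteristic exponents converge, and Lévy's
continuity theorem gives convergence in distribution.
-/

section LevyContinuity

variable {E ι : Type*} [NormedAddCommGroup E] [InnerProductSpace ℝ E] [FiniteDimensional ℝ E]
  [MeasurableSpace E] [BorelSpace E]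

theorem exists_tendsto_subseq_of_tendsto_charFun {μ : ℕ → ProbabilityMeasure E} {φ : E → ℂ}
    (hφ : ContinuousAt φ 0) (h : ∀ x, Tendsto (fun n ↦ charFun (μ n) x) atTop (𝓝 (φ x))) :
    ∃ (ν : ProbabilityMeasure E) (k : ℕ → ℕ), StrictMono k ∧
      Tendsto (μ ∘ k) atTop (𝓝 ν) := by
  have htight : IsTightMeasureSet {((ρ : ProbabilityMeasure E) : Measure E) | ρ ∈ range μ} := by
    simpa [range] using isTightMeasureSet_of_tendsto_charFun hφ h
  obtain ⟨ν, -, k, hk, hν⟩ := (isCompact_closure_of_isTightMeasureSet htight).isSeqCompact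
    fun n ↦ subset_closure (mem_range_self n)
  exact ⟨ν, k, hk, hν⟩

theorem exists_tendsto_of_tendsto_charFun {l : Filter ι} [l.NeBot] [l.IsCountablyGenerated]
    {μ : ι → ProbabilityMeasure E} {φ : E → ℂ} (hφ : ContinuousAt φ 0)
    (h : ∀ x, Tendsto (fun i ↦ charFun (μ i) x) l (𝓝 (φ x))) :
    ∃ ν : ProbabilityMeasure E, charFun (ν : Measure E) = φ ∧ Tendsto μ l (𝓝 ν) := by
  obtain ⟨i, hi⟩ := exists_seq_tendsto l
  obtain ⟨ν, k, hk, hν⟩ :=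
    exists_tendsto_subseq_of_tendsto_charFun hφ fun x ↦ (h x).comp hi
  have hνφ : charFun (ν : Measure E) = φ := funext fun x ↦
    tendsto_nhds_unique (ProbabilityMeasure.tendsto_iff_tendsto_charFun.1 hν x)
      (((h x).comp hi).comp hk.tendsto_atTop)
  refine ⟨ν, hνφ, tendsto_of_seq_tendsto fun j hj ↦ ?_⟩
  refine ProbabilityMeasure.tendsto_of_tendsto_charFun fun x ↦ ?_
  rw [hνφ]
  exact (h x).comp hj

end LevyContinuity

section OverlapLength

variable {a k s t u : ℝ}

lemma ellK_nonneg (t s u : ℝ) : 0 ≤ ellK t s u := le_max_left _ _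

lemma measurable_ellK (t : ℝ) : Measurable fun x : ℝ × ℝ ↦ ellK t x.1 x.2 := by
  unfold ellK; fun_prop

lemma ellK_const_mul (hk : 0 ≤ k) (t s u : ℝ) :
    ellK (k * t) (k * s) (k * u) = k * ellK t s u := by
  simp only [ellK, mul_max_of_nonneg _ _ hk, mul_sub, mul_min_of_nonneg _ _ hk, mul_add, mul_zero]

lemma ellK_le_length (hu : 0 ≤ u) (t s : ℝ) : ellK t s u ≤ u :=
  max_le hu (by linarith [min_le_left (s + u) t, le_max_left s 0])

lemma abs_mul_ellK_le (ht : 0 ≤ t) (hu : 0 ≤ u) (s : ℝ) : |s| * ellK t s u ≤ t * u := by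
  rcases (ellK_nonneg t s u).eq_or_lt with h | h
  · rw [← h, mul_zero]
    positivity
  obtain ⟨⟨-, hst⟩, hsu, -⟩ : (0 < u ∧ s < t) ∧ 0 < s + u ∧ 0 < t := by simpa [ellK] using h
  rcases le_total 0 s with hs | hs
  · rw [abs_of_nonneg hs]
    exact mul_le_mul hst.le (ellK_le_length hu t s) h.le ht
  · have hℓt : ellK t s u ≤ t :=
      max_le ht (by linarith [min_le_right (s + u) t, le_max_right s 0])
    rw [abs_of_nonpos hs, mul_comm t]
    exact mul_le_mul (by linarith) hℓt h.le hu

lemma ellK_mul_left_le (ha : 0 < a) (hu : 0 ≤ u) (s : ℝ) :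
    ellK a (a * s) u ≤ (1 + |s|)⁻¹ * (2 * u) := by
  have hs : |s| * ellK a (a * s) u ≤ u := by
    refine le_of_mul_le_mul_left ?_ ha
    simpa only [abs_mul, abs_of_pos ha, mul_assoc] using abs_mul_ellK_le ha.le hu (a * s)
  rw [inv_mul_eq_div, le_div_iff₀ (by positivity)]
  linarith [ellK_le_length hu a (a * s)]

lemma eventually_ellK_mul_left_eq (hu : 0 ≤ u) (hs₀ : s ≠ 0) (hs₁ : s ≠ 1) :
    ∀ᶠ a in atTop, ellK a (a * s) u = (Ioo (0 : ℝ) 1).indicator (fun _ ↦ u) s := by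
  rcases hs₀.lt_or_gt with hs | hs
  · filter_upwards [eventually_ge_atTop (u / -s)] with a ha
    rw [div_le_iff₀ (by linarith)] at ha
    rw [indicator_of_notMem (by simp [hs.le])]
    exact max_eq_left (by linarith [min_le_left (a * s + u) a, le_max_right (a * s) 0])
  rcases hs₁.lt_or_gt with hs' | hs'
  · filter_upwards [eventually_ge_atTop (u / (1 - s)), eventually_ge_atTop 0] with a ha ha₀
    rw [div_le_iff₀ (by linarith)] at ha
    rw [indicator_of_mem (mem_Ioo.2 ⟨hs, hs'⟩), ellK, min_eq_left (by linarith),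
      max_eq_left (a := a * s) (by positivity), add_sub_cancel_left, max_eq_right hu]
  · filter_upwards [eventually_ge_atTop 0] with a ha
    rw [indicator_of_notMem (by simp [hs'.le])]
    exact max_eq_left (by nlinarith [min_le_right (a * s + u) a, le_max_left (a * s) 0])

end OverlapLength

section PowerLaw

variable {E : Type*} [NormedAddCommGroup E] [NormedSpace ℝ E] {γ p q b : ℝ}

instance muU.sigmaFinite (γ : ℝ) : SigmaFinite (muU γ) := by
  unfold muU; infer_instance

lemma ae_pos_muU (γ : ℝ) : ∀ᵐ u ∂muU γ, 0 < u :=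
  (withDensity_absolutelyContinuous _ _).ae_le (ae_restrict_mem measurableSet_Ioi)

lemma integral_muU (γ : ℝ) (f : ℝ → E) :
    ∫ u, f u ∂muU γ = ∫ u in Ioi 0, u ^ (-γ - 1) • f u := by
  rw [muU, integral_withDensity_eq_integral_toReal_smul (by fun_prop) (by simp)]
  refine setIntegral_congr_fun measurableSet_Ioi fun u hu ↦ ?_
  simp only [ENNReal.toReal_ofReal (Real.rpow_nonneg (mem_Ioi.1 hu).le _)]

lemma integrable_muU_iff {f : ℝ → E} :
    Integrable f (muU γ) ↔ IntegrableOn (fun u ↦ u ^ (-γ - 1) • f u) (Ioi 0) := by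
  rw [muU, integrable_withDensity_iff_integrable_smul' (by fun_prop) (by simp)]
  refine integrableOn_congr_fun (fun u hu ↦ ?_) measurableSet_Ioi
  simp only [ENNReal.toReal_ofReal (Real.rpow_nonneg (mem_Ioi.1 hu).le _)]

lemma integrable_min_rpow_muU (hp : p < γ) (hq : γ < q) :
    Integrable (fun u ↦ min (u ^ p) (u ^ q)) (muU γ) := by
  rw [integrable_muU_iff, ← Ioc_union_Ioi_eq_Ioi zero_le_one]
  refine IntegrableOn.union ?_ ?_
  · have hint : IntegrableOn (fun u : ℝ ↦ u ^ (-γ - 1 + q)) (Ioc 0 1) :=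
      (intervalIntegral.intervalIntegrable_rpow' (by linarith)).1
    refine hint.mono' (by fun_prop) ?_
    filter_upwards [ae_restrict_mem measurableSet_Ioc] with u hu
    have hu₀ : 0 < u := hu.1
    rw [Real.norm_of_nonneg (by positivity), smul_eq_mul, Real.rpow_add hu₀]
    gcongr
    exact min_le_right _ _
  · have hint : IntegrableOn (fun u : ℝ ↦ u ^ (-γ - 1 + p)) (Ioi 1) :=
      integrableOn_Ioi_rpow_of_lt (by linarith) one_pos
    refine hint.mono' (by fun_prop) ?_
    filter_upwards [ae_restrict_mem measurableSet_Ioi] with u hu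
    have hu₀ : 0 < u := one_pos.trans hu
    rw [Real.norm_of_nonneg (by positivity), smul_eq_mul, Real.rpow_add hu₀]
    gcongr
    exact min_le_left _ _

lemma map_mul_left_restrict_Ioi (hb : 0 < b) :
    (volume.restrict (Ioi (0 : ℝ))).map (b * ·) =
      ENNReal.ofReal b⁻¹ • volume.restrict (Ioi 0) := by
  have hpre : (b * ·) ⁻¹' Ioi (0 : ℝ) = Ioi 0 := by simp [preimage_const_mul_Ioi₀ _ hb]
  rw [← abs_of_pos (inv_pos.2 hb), ← Measure.restrict_smul, ← Real.map_volume_mul_left hb.ne',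
    Measure.restrict_map (by fun_prop) measurableSet_Ioi, hpre]

lemma map_mul_left_muU (hb : 0 < b) (γ : ℝ) :
    (muU γ).map (b * ·) = ENNReal.ofReal (b ^ γ) • muU γ := by
  let ρ : ℝ → ℝ≥0∞ := fun u ↦ ENNReal.ofReal (u ^ (-γ - 1))
  have hρ : Measurable ρ := by fun_prop
  have hρb : ∀ u ∈ Ioi (0 : ℝ), ρ u = ENNReal.ofReal (b ^ (γ + 1)) * ρ (b * u) := fun u hu ↦ by
    rw [← ENNReal.ofReal_mul (by positivity), Real.mul_rpow hb.le (mem_Ioi.1 hu).le, ← mul_assoc,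
      ← Real.rpow_add hb]
    simp [ρ]
  refine Measure.ext_of_lintegral _ fun f hf ↦ ?_
  calc ∫⁻ u, f u ∂(muU γ).map (b * ·)
      = ∫⁻ u in Ioi 0, ρ u * f (b * u) := by
        rw [lintegral_map hf (by fun_prop), muU,
          lintegral_withDensity_eq_lintegral_mul _ hρ (by fun_prop)]
        rfl
    _ = ∫⁻ u in Ioi 0, ENNReal.ofReal (b ^ (γ + 1)) * (ρ (b * u) * f (b * u)) :=
        setLIntegral_congr_fun measurableSet_Ioi fun u hu ↦ by
          simp only [hρb u hu, mul_assoc]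
    _ = ENNReal.ofReal (b ^ (γ + 1)) * ∫⁻ u, ρ u * f u ∂(volume.restrict (Ioi 0)).map (b * ·) := by
        rw [lintegral_const_mul _ (by fun_prop), lintegral_map (by fun_prop) (by fun_prop)]
    _ = ENNReal.ofReal (b ^ γ) * ∫⁻ u in Ioi 0, ρ u * f u := by
        rw [map_mul_left_restrict_Ioi hb, lintegral_smul_measure, smul_eq_mul, ← mul_assoc,
          ← ENNReal.ofReal_mul (by positivity), Real.rpow_add_one hb.ne',
          mul_inv_cancel_right₀ hb.ne']
    _ = ∫⁻ u, f u ∂(ENNReal.ofReal (b ^ γ) • muU γ) := by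
        rw [lintegral_smul_measure, muU, lintegral_withDensity_eq_lintegral_mul _ hρ hf]
        rfl

end PowerLaw

section OverlapMeasure

variable {E : Type*} [NormedAddCommGroup E] {γ a k t : ℝ} {g : ℝ → E}

instance muEll.sFinite (γ t : ℝ) : SFinite (muEll γ t) := by
  unfold muEll; infer_instance

lemma ae_pos_muEll (γ t : ℝ) : ∀ᵐ ℓ ∂muEll γ t, 0 < ℓ := ae_restrict_mem measurableSet_Ioi

lemma map_prodMap_mul_left_volume_prod_muU (ha : 0 < a) (hk : 0 < k) (γ : ℝ) :
    (volume.prod (muU γ)).map (Prod.map (a * ·) (k * ·)) =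
      ENNReal.ofReal (a⁻¹ * k ^ γ) • volume.prod (muU γ) := by
  rw [← Measure.map_prod_map _ _ (by fun_prop) (by fun_prop), map_mul_left_muU hk,
    Real.map_volume_mul_left ha.ne', abs_of_pos (inv_pos.2 ha), Measure.prod_smul_left,
    Measure.prod_smul_right, smul_smul, ← ENNReal.ofReal_mul (by positivity)]

lemma map_mul_left_muEll (hk : 0 < k) (γ t : ℝ) :
    (muEll γ t).map (k * ·) = ENNReal.ofReal (k ^ (γ - 1)) • muEll γ (k * t) := by
  have hpre : (k * ·) ⁻¹' Ioi (0 : ℝ) = Ioi 0 := by simp [preimage_const_mul_Ioi₀ _ hk]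
  have hcomp : (k * ·) ∘ (fun x : ℝ × ℝ ↦ ellK t x.1 x.2) =
      (fun x : ℝ × ℝ ↦ ellK (k * t) x.1 x.2) ∘ Prod.map (k * ·) (k * ·) :=
    funext fun x ↦ (ellK_const_mul hk.le t x.1 x.2).symm
  have hexp : k⁻¹ * k ^ γ = k ^ (γ - 1) := by rw [Real.rpow_sub_one hk.ne', div_eq_inv_mul]
  nth_rw 1 [muEll, ← hpre]
  rw [← Measure.restrict_map (by fun_prop) measurableSet_Ioi,
    Measure.map_map (by fun_prop) (measurable_ellK t), hcomp,
    ← Measure.map_map (measurable_ellK _) (by fun_prop),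
    map_prodMap_mul_left_volume_prod_muU hk hk, Measure.map_smul, Measure.restrict_smul, hexp,
    muEll]

lemma muEll_eq_smul_map (ha : 0 < a) (γ : ℝ) :
    muEll γ a = ENNReal.ofReal a •
      ((volume.prod (muU γ)).map fun x : ℝ × ℝ ↦ ellK a (a * x.1) x.2).restrict (Ioi 0) := by
  have hcomp : (fun x : ℝ × ℝ ↦ ellK a (a * x.1) x.2) =
      (fun x : ℝ × ℝ ↦ ellK a x.1 x.2) ∘ Prod.map (a * ·) (1 * ·) := by
    ext x
    simp
  rw [hcomp, ← Measure.map_map (measurable_ellK a) (by fun_prop),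
    map_prodMap_mul_left_volume_prod_muU ha one_pos, Measure.map_smul, Measure.restrict_smul,
    smul_smul, ← ENNReal.ofReal_mul ha.le, Real.one_rpow, mul_one, mul_inv_cancel₀ ha.ne',
    ENNReal.ofReal_one, one_smul, muEll]

lemma measurable_ellK_mul_left (a : ℝ) : Measurable fun x : ℝ × ℝ ↦ ellK a (a * x.1) x.2 :=
  (measurable_ellK a).comp (by fun_prop : Measurable fun x : ℝ × ℝ ↦ (a * x.1, x.2))

lemma integrable_muEll_of_comp_ellK (hg : StronglyMeasurable g) (ha : 0 < a)
    (hint : Integrable (fun x : ℝ × ℝ ↦ g (ellK a (a * x.1) x.2)) (volume.prod (muU γ))) :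
    Integrable g (muEll γ a) := by
  rw [muEll_eq_smul_map ha]
  refine Integrable.smul_measure (Integrable.restrict ?_) ENNReal.ofReal_ne_top
  exact (integrable_map_measure hg.aestronglyMeasurable
    (measurable_ellK_mul_left a).aemeasurable).2 hint

variable [NormedSpace ℝ E]

lemma integral_comp_mul_left_muEll (hk : 0 < k) (ht : t ≠ 0) (g : ℝ → E) :
    ∫ ℓ, g (k * ℓ) ∂muEll γ t = (k ^ γ * t) • (k * t)⁻¹ • ∫ ℓ, g ℓ ∂muEll γ (k * t) := by
  have hexp : k ^ (γ - 1) = k ^ γ * t * (k * t)⁻¹ := by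
    rw [Real.rpow_sub_one hk.ne']
    field_simp
  rw [← (measurableEmbedding_mulLeft₀ hk.ne').integral_map, map_mul_left_muEll hk,
    integral_smul_measure, ENNReal.toReal_ofReal (by positivity), hexp, mul_smul]

lemma inv_smul_integral_muEll (hg : StronglyMeasurable g) (hg₀ : g 0 = 0) (ha : 0 < a) :
    a⁻¹ • ∫ ℓ, g ℓ ∂muEll γ a =
      ∫ x : ℝ × ℝ, g (ellK a (a * x.1) x.2) ∂volume.prod (muU γ) := by
  have hzero : ∀ x : ℝ × ℝ, x ∉ (fun x ↦ ellK a (a * x.1) x.2) ⁻¹' Ioi 0 →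
      g (ellK a (a * x.1) x.2) = 0 :=
    fun x hx ↦ by rw [le_antisymm (not_lt.1 hx) (ellK_nonneg _ _ _), hg₀]
  rw [muEll_eq_smul_map ha, integral_smul_measure, ENNReal.toReal_ofReal ha.le,
    inv_smul_smul₀ ha.ne', setIntegral_map measurableSet_Ioi hg.aestronglyMeasurable
    (measurable_ellK_mul_left a).aemeasurable,
    setIntegral_eq_integral_of_forall_compl_eq_zero hzero]

end OverlapMeasure

section WindowAverages

variable {E : Type*} [NormedAddCommGroup E] {γ C : ℝ} {g : ℝ → E}

lemma min_sq_le_rpow_mul_min {c v w p : ℝ} (hp₁ : 1 ≤ p) (hp₂ : p ≤ 2) (hc₀ : 0 < c) (hc₁ : c ≤ 1)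
    (hv : 0 ≤ v) (hw : 0 ≤ w) (hwcv : w ≤ c * v) :
    min w (w ^ 2) ≤ c ^ p * min (v ^ p) (v ^ (2 : ℝ)) := by
  have hrpow : ∀ q : ℝ, p ≤ q → q ≤ 2 → min w (w ^ 2) ≤ c ^ p * v ^ q := fun q hpq hq ↦
    calc min w (w ^ 2) ≤ w ^ q := by
          rcases le_total w 1 with h | h
          · refine min_le_of_right_le ?_
            rw [← Real.rpow_two]
            exact Real.rpow_le_rpow_of_exponent_ge' hw h (by linarith) hq
          · exact min_le_of_left_le (Real.self_le_rpow_of_one_le h (by linarith))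
      _ ≤ (c * v) ^ q := Real.rpow_le_rpow hw hwcv (by linarith)
      _ = c ^ q * v ^ q := Real.mul_rpow hc₀.le hv
      _ ≤ c ^ p * v ^ q := by
          gcongr ?_ * _
          exact Real.rpow_le_rpow_of_exponent_ge hc₀ hc₁ hpq
  rw [mul_min_of_nonneg _ _ (by positivity)]
  exact le_min (hrpow p le_rfl hp₂) (hrpow 2 hp₂ le_rfl)

theorem exists_integrable_forall_min_sq_ellK_le (hγ₁ : 1 < γ) (hγ₂ : γ < 2) :
    ∃ D : ℝ × ℝ → ℝ, Integrable D (volume.prod (muU γ)) ∧ ∀ a, 0 < a →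
      ∀ᵐ x ∂volume.prod (muU γ),
        min (ellK a (a * x.1) x.2) (ellK a (a * x.1) x.2 ^ 2) ≤ D x := by
  -- Any `p ∈ (1, γ)` works: `p > 1` makes `s ↦ (1 + |s|)⁻ᵖ` integrable over the line, and
  -- `p < γ` makes `u ↦ u ^ p` integrable at infinity against `u ^ (-γ - 1)`.
  obtain ⟨p, hp₁, hpγ⟩ := exists_between hγ₁
  have hweight : Integrable (fun s : ℝ ↦ (1 + ‖s‖) ^ (-p)) :=
    integrable_one_add_norm (by simpa using hp₁)
  have hpower : Integrable (fun u ↦ min ((2 * u) ^ p) ((2 * u) ^ (2 : ℝ))) (muU γ) := by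
    refine Integrable.comp_measurable (f := (2 * ·))
      (g := fun u ↦ min (u ^ p) (u ^ (2 : ℝ))) ?_ (by fun_prop)
    rw [map_mul_left_muU two_pos]
    exact (integrable_min_rpow_muU hpγ hγ₂).smul_measure ENNReal.ofReal_ne_top
  refine ⟨_, hweight.mul_prod hpower, fun a ha ↦ ?_⟩
  filter_upwards [Measure.quasiMeasurePreserving_snd.ae (ae_pos_muU γ)] with x hx
  rw [Real.rpow_neg (by positivity), ← Real.inv_rpow (by positivity)]
  exact min_sq_le_rpow_mul_min hp₁.le (by linarith) (by positivity)
    (inv_le_one_of_one_le₀ (by linarith [norm_nonneg x.1])) (by positivity) (ellK_nonneg _ _ _)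
    (ellK_mul_left_le ha hx.le x.1)

lemma exists_integrable_forall_norm_comp_ellK_le (hγ₁ : 1 < γ) (hγ₂ : γ < 2)
    (hgC : ∀ v, 0 ≤ v → ‖g v‖ ≤ C * min v (v ^ 2)) :
    ∃ D : ℝ × ℝ → ℝ, Integrable D (volume.prod (muU γ)) ∧ ∀ a, 0 < a →
      ∀ᵐ x ∂volume.prod (muU γ), ‖g (ellK a (a * x.1) x.2)‖ ≤ D x := by
  obtain ⟨D, hD, hle⟩ := exists_integrable_forall_min_sq_ellK_le hγ₁ hγ₂
  have hC : 0 ≤ C := (norm_nonneg (g 1)).trans (by simpa using hgC 1 zero_le_one)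
  refine ⟨fun x ↦ C * D x, hD.const_mul C, fun a ha ↦ ?_⟩
  filter_upwards [hle a ha] with x hx
  exact (hgC _ (ellK_nonneg _ _ _)).trans (mul_le_mul_of_nonneg_left hx hC)

lemma integrable_muEll (hγ₁ : 1 < γ) (hγ₂ : γ < 2) (hg : StronglyMeasurable g)
    (hgC : ∀ v, 0 ≤ v → ‖g v‖ ≤ C * min v (v ^ 2)) {a : ℝ} (ha : 0 < a) :
    Integrable g (muEll γ a) := by
  obtain ⟨D, hD, hle⟩ := exists_integrable_forall_norm_comp_ellK_le hγ₁ hγ₂ hgC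
  exact integrable_muEll_of_comp_ellK hg ha <|
    hD.mono' (hg.comp_measurable (measurable_ellK_mul_left a)).aestronglyMeasurable (hle a ha)

lemma integrable_comp_mul_left_muEll (hγ₁ : 1 < γ) (hγ₂ : γ < 2) (hg : StronglyMeasurable g)
    (hgC : ∀ v, 0 ≤ v → ‖g v‖ ≤ C * min v (v ^ 2)) {k t : ℝ} (hk : 0 < k) (ht : 0 < t) :
    Integrable (fun ℓ ↦ g (k * ℓ)) (muEll γ t) := by
  refine Integrable.comp_measurable (f := (k * ·)) ?_ (by fun_prop)
  rw [map_mul_left_muEll hk]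
  exact (integrable_muEll hγ₁ hγ₂ hg hgC (by positivity)).smul_measure ENNReal.ofReal_ne_top

lemma apply_zero_eq_zero_of_norm_le (hgC : ∀ v, 0 ≤ v → ‖g v‖ ≤ C * min v (v ^ 2)) : g 0 = 0 := by
  simpa using hgC 0 le_rfl

theorem exists_integral_norm_comp_mul_left_muEll_le (hγ₁ : 1 < γ) (hγ₂ : γ < 2)
    (hg : StronglyMeasurable g) (hgC : ∀ v, 0 ≤ v → ‖g v‖ ≤ C * min v (v ^ 2)) :
    ∃ K, ∀ k t, 0 < k → 0 < t → ∫ ℓ, ‖g (k * ℓ)‖ ∂muEll γ t ≤ k ^ γ * t * K := by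
  obtain ⟨D, hD, hle⟩ := exists_integrable_forall_norm_comp_ellK_le hγ₁ hγ₂ hgC
  refine ⟨∫ x, D x ∂volume.prod (muU γ), fun k t hk ht ↦ ?_⟩
  rw [integral_comp_mul_left_muEll hk ht.ne' (fun v ↦ ‖g v‖), inv_smul_integral_muEll hg.norm
    (by rw [apply_zero_eq_zero_of_norm_le hgC, norm_zero]) (by positivity), smul_eq_mul]
  exact mul_le_mul_of_nonneg_left
    (integral_mono_of_nonneg (.of_forall fun _ ↦ norm_nonneg _) hD (hle _ (by positivity)))
    (by positivity)

variable [NormedSpace ℝ E]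

lemma integral_indicator_unitInterval_prod (γ : ℝ) (g : ℝ → E) (hg₀ : g 0 = 0) :
    ∫ x : ℝ × ℝ, g ((Ioo (0 : ℝ) 1).indicator (fun _ ↦ x.2) x.1) ∂volume.prod (muU γ) =
      ∫ u, g u ∂muU γ := by
  have hsmul : ∀ x : ℝ × ℝ, g ((Ioo (0 : ℝ) 1).indicator (fun _ ↦ x.2) x.1) =
      (Ioo (0 : ℝ) 1).indicator (1 : ℝ → ℝ) x.1 • g x.2 := fun x ↦ by
    by_cases hx : x.1 ∈ Ioo (0 : ℝ) 1 <;> simp [hx, hg₀]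
  simp_rw [hsmul]
  rw [integral_prod_smul, integral_indicator_one measurableSet_Ioo]
  simp

theorem tendsto_inv_smul_integral_muEll (hγ₁ : 1 < γ) (hγ₂ : γ < 2) (hg : StronglyMeasurable g)
    (hgC : ∀ v, 0 ≤ v → ‖g v‖ ≤ C * min v (v ^ 2)) :
    Tendsto (fun a ↦ a⁻¹ • ∫ ℓ, g ℓ ∂muEll γ a) atTop (𝓝 (∫ u, g u ∂muU γ)) := by
  obtain ⟨D, hD, hle⟩ := exists_integrable_forall_norm_comp_ellK_le hγ₁ hγ₂ hgC
  have hg₀ := apply_zero_eq_zero_of_norm_le hgC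
  have hne : ∀ᵐ x : ℝ × ℝ ∂volume.prod (muU γ), x.1 ≠ 0 ∧ x.1 ≠ 1 :=
    Measure.quasiMeasurePreserving_fst.ae
      ((Measure.ae_ne volume 0).and (Measure.ae_ne volume 1))
  have hlim : Tendsto (fun a ↦ ∫ x : ℝ × ℝ, g (ellK a (a * x.1) x.2) ∂volume.prod (muU γ)) atTop
      (𝓝 (∫ x : ℝ × ℝ, g ((Ioo (0 : ℝ) 1).indicator (fun _ ↦ x.2) x.1)
        ∂volume.prod (muU γ))) := by
    refine tendsto_integral_filter_of_dominated_convergence D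
      (.of_forall fun a ↦ (hg.comp_measurable (measurable_ellK_mul_left a)).aestronglyMeasurable)
      ((eventually_gt_atTop 0).mono hle) hD ?_
    filter_upwards [hne, Measure.quasiMeasurePreserving_snd.ae (ae_pos_muU γ)] with x hx hu
    refine tendsto_const_nhds.congr' ?_
    filter_upwards [eventually_ellK_mul_left_eq hu.le hx.1 hx.2] with a ha
    rw [ha]
  rw [← integral_indicator_unitInterval_prod γ g hg₀]
  refine hlim.congr' ?_
  filter_upwards [eventually_gt_atTop 0] with a ha
  rw [inv_smul_integral_muEll hg hg₀ ha]

theorem tendsto_integral_comp_mul_left_muEll (hγ₁ : 1 < γ) (hγ₂ : γ < 2)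
    (hg : StronglyMeasurable g) (hgC : ∀ v, 0 ≤ v → ‖g v‖ ≤ C * min v (v ^ 2)) {κ : ℝ → ℝ} {w : ℝ}
    (hκ : ∀ᶠ t in atTop, 0 < κ t) (hweight : Tendsto (fun t ↦ κ t ^ γ * t) atTop (𝓝 w))
    (hwindow : Tendsto (fun t ↦ κ t * t) atTop atTop) :
    Tendsto (fun t ↦ ∫ ℓ, g (κ t * ℓ) ∂muEll γ t) atTop (𝓝 (w • ∫ u, g u ∂muU γ)) := by
  refine (hweight.smul
    ((tendsto_inv_smul_integral_muEll hγ₁ hγ₂ hg hgC).comp hwindow)).congr' ?_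
  filter_upwards [hκ, eventually_ne_atTop 0] with t hk ht
  exact (integral_comp_mul_left_muEll hk ht g).symm

end WindowAverages

section RewardMeasure

variable {E : Type*} [NormedAddCommGroup E] {γ C k t : ℝ} {g : ℝ → E} {FR : Measure ℝ}

lemma integral_rpow_pos [NeZero FR] (hpos : ∀ᵐ r ∂FR, 0 < r)
    (hmom : Integrable (fun r ↦ r ^ γ) FR) : 0 < ∫ r, r ^ γ ∂FR := by
  have hnonneg : 0 ≤ᵐ[FR] fun r ↦ r ^ γ := hpos.mono fun r hr ↦ (Real.rpow_pos_of_pos hr γ).le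
  refine (integral_nonneg_of_ae hnonneg).lt_of_ne' fun h ↦ ?_
  obtain ⟨r, hr₀, hr⟩ :=
    (((integral_eq_zero_iff_of_nonneg_ae hnonneg hmom).1 h).and hpos).exists
  exact (Real.rpow_pos_of_pos hr γ).ne' hr₀

lemma rpow_neg_one_div_rpow_mul {m : ℝ} (hγ : γ ≠ 0) (hm : 0 < m) (ht : 0 < t) :
    ((m * t) ^ (-1 / γ)) ^ γ * t = m⁻¹ := by
  rw [← Real.rpow_mul (by positivity), div_mul_cancel₀ _ hγ, Real.rpow_neg_one]
  field_simp

lemma tendsto_rpow_neg_one_div_mul_self_atTop {m : ℝ} (hγ : 1 < γ) (hm : 0 < m) :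
    Tendsto (fun t ↦ (m * t) ^ (-1 / γ) * t) atTop atTop := by
  have hexp : 0 < 1 + -1 / γ := by
    rw [neg_div, ← sub_eq_add_neg, sub_pos, div_lt_one (by linarith)]
    exact hγ
  refine ((tendsto_rpow_atTop hexp).const_mul_atTop
    (Real.rpow_pos_of_pos hm (-1 / γ))).congr' ?_
  filter_upwards [eventually_gt_atTop 0] with t ht
  rw [Real.mul_rpow hm.le ht.le, Real.rpow_add ht, Real.rpow_one]
  ring

lemma muEllR_eq_map (hpos : ∀ᵐ r ∂FR, 0 < r) (γ t : ℝ) :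
    muEllR γ t FR = (FR.prod (muEll γ t)).map fun x ↦ x.1 * x.2 := by
  refine Measure.restrict_eq_self_of_ae_mem ?_
  refine (ae_map_iff (by fun_prop) measurableSet_Ioi).2 ?_
  filter_upwards [Measure.quasiMeasurePreserving_fst.ae hpos,
    Measure.quasiMeasurePreserving_snd.ae (ae_pos_muEll γ t)] with x hr hℓ
  exact mul_pos hr hℓ

lemma integrable_comp_mul_prod_muEll (hγ₁ : 1 < γ) (hγ₂ : γ < 2) (hg : StronglyMeasurable g)
    (hgC : ∀ v, 0 ≤ v → ‖g v‖ ≤ C * min v (v ^ 2)) (hpos : ∀ᵐ r ∂FR, 0 < r)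
    (hmom : Integrable (fun r ↦ r ^ γ) FR) (hk : 0 < k) (ht : 0 < t) :
    Integrable (fun x : ℝ × ℝ ↦ g (k * x.1 * x.2)) (FR.prod (muEll γ t)) := by
  obtain ⟨K, hK⟩ := exists_integral_norm_comp_mul_left_muEll_le hγ₁ hγ₂ hg hgC
  have hmeas : StronglyMeasurable fun x : ℝ × ℝ ↦ g (k * x.1 * x.2) :=
    hg.comp_measurable (by fun_prop)
  refine (integrable_prod_iff hmeas.aestronglyMeasurable).2
    ⟨?_, (hmom.const_mul (k ^ γ * t * K)).mono'
      hmeas.norm.integral_prod_right'.aestronglyMeasurable ?_⟩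
  · filter_upwards [hpos] with r hr
    exact integrable_comp_mul_left_muEll hγ₁ hγ₂ hg hgC (by positivity) ht
  · filter_upwards [hpos] with r hr
    rw [Real.norm_of_nonneg (by positivity)]
    calc ∫ ℓ, ‖g (k * r * ℓ)‖ ∂muEll γ t ≤ (k * r) ^ γ * t * K := hK _ _ (by positivity) ht
      _ = k ^ γ * t * K * r ^ γ := by rw [Real.mul_rpow hk.le hr.le]; ring

variable [NormedSpace ℝ E] [SFinite FR]

lemma integral_comp_mul_left_muEllR (hγ₁ : 1 < γ) (hγ₂ : γ < 2) (hg : StronglyMeasurable g)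
    (hgC : ∀ v, 0 ≤ v → ‖g v‖ ≤ C * min v (v ^ 2)) (hpos : ∀ᵐ r ∂FR, 0 < r)
    (hmom : Integrable (fun r ↦ r ^ γ) FR) (hk : 0 < k) (ht : 0 < t) :
    ∫ v, g (k * v) ∂muEllR γ t FR = ∫ r, ∫ ℓ, g (k * r * ℓ) ∂muEll γ t ∂FR := by
  have hmeas : StronglyMeasurable fun v ↦ g (k * v) := hg.comp_measurable (by fun_prop)
  rw [muEllR_eq_map hpos, integral_map (by fun_prop) hmeas.aestronglyMeasurable]
  simp only [← mul_assoc k]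
  exact integral_prod _ (integrable_comp_mul_prod_muEll hγ₁ hγ₂ hg hgC hpos hmom hk ht)

theorem tendsto_integral_comp_mul_muEllR [CompleteSpace E] [NeZero FR] (hγ₁ : 1 < γ)
    (hγ₂ : γ < 2) (hg : StronglyMeasurable g)
    (hgC : ∀ v, 0 ≤ v → ‖g v‖ ≤ C * min v (v ^ 2)) (hpos : ∀ᵐ r ∂FR, 0 < r)
    (hmom : Integrable (fun r ↦ r ^ γ) FR) :
    Tendsto (fun t ↦ ∫ v, g (((∫ r, r ^ γ ∂FR) * t) ^ (-1 / γ) * v) ∂muEllR γ t FR) atTop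
      (𝓝 (∫ u, g u ∂muU γ)) := by
  have hm := integral_rpow_pos hpos hmom
  set m := ∫ r, r ^ γ ∂FR with hm_def
  let κ : ℝ → ℝ := fun t ↦ (m * t) ^ (-1 / γ)
  have hκ : ∀ t, 0 < t → 0 < κ t := fun t ht ↦ by positivity
  have hweight : ∀ r t, 0 < r → 0 < t → (κ t * r) ^ γ * t = r ^ γ / m := fun r t hr ht ↦ by
    rw [Real.mul_rpow (hκ t ht).le hr.le, mul_right_comm,
      rpow_neg_one_div_rpow_mul (by linarith) hm ht, inv_mul_eq_div]
  obtain ⟨K, hK⟩ := exists_integral_norm_comp_mul_left_muEll_le hγ₁ hγ₂ hg hgC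
  have hlim : Tendsto (fun t ↦ ∫ r, ∫ ℓ, g (κ t * r * ℓ) ∂muEll γ t ∂FR) atTop
      (𝓝 (∫ r, (r ^ γ / m) • ∫ u, g u ∂muU γ ∂FR)) := by
    refine tendsto_integral_filter_of_dominated_convergence (fun r ↦ r ^ γ / m * K)
      (.of_forall fun t ↦ ?_) ?_ ((hmom.div_const m).mul_const K) ?_
    · exact (hg.comp_measurable (by fun_prop :
        Measurable fun x : ℝ × ℝ ↦ κ t * x.1 * x.2)).integral_prod_right'.aestronglyMeasurable
    · filter_upwards [eventually_gt_atTop 0] with t ht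
      filter_upwards [hpos] with r hr
      rw [← hweight r t hr ht]
      exact (norm_integral_le_integral_norm _).trans (hK _ _ (mul_pos (hκ t ht) hr) ht)
    · filter_upwards [hpos] with r hr
      refine tendsto_integral_comp_mul_left_muEll hγ₁ hγ₂ hg hgC ?_ ?_ ?_
      · filter_upwards [eventually_gt_atTop 0] with t ht using mul_pos (hκ t ht) hr
      · refine tendsto_const_nhds.congr' ?_
        filter_upwards [eventually_gt_atTop 0] with t ht using (hweight r t hr ht).symm
      · simpa only [mul_left_comm, mul_assoc] using
          (tendsto_rpow_neg_one_div_mul_self_atTop hγ₁ hm).const_mul_atTop hr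
  rw [integral_smul_const, integral_div, ← hm_def, div_self hm.ne', one_smul] at hlim
  refine hlim.congr' ?_
  filter_upwards [eventually_gt_atTop 0] with t ht
  rw [integral_comp_mul_left_muEllR hγ₁ hγ₂ hg hgC hpos hmom (hκ t ht) ht]

end RewardMeasure

section StableExponent

variable {γ : ℝ}

/-- The compensated exponential `e^{ix} - 1 - ix` of the Lévy–Khintchine formula. -/
noncomputable def compExp (x : ℝ) : ℂ := Complex.exp (x * Complex.I) - 1 - x * Complex.I

/-- The characteristic exponent `∫_0^∞ (e^{iθu} - 1 - iθu) u^{-γ-1} du` of the centered `γ`-stable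
law with positive spectrum. -/
noncomputable def stableExponent (γ θ : ℝ) : ℂ := ∫ u, compExp (θ * u) ∂muU γ

lemma continuous_compExp : Continuous compExp := by unfold compExp; fun_prop

lemma norm_compExp_le_two_mul_abs (x : ℝ) : ‖compExp x‖ ≤ 2 * |x| := by
  have hexp : ‖Complex.exp (x * Complex.I) - 1‖ ≤ |x| := by
    simpa only [mul_comm, Real.norm_eq_abs] using
      Real.norm_exp_I_mul_ofReal_sub_one_le (x := x)
  calc ‖compExp x‖ ≤ ‖Complex.exp (x * Complex.I) - 1‖ + ‖(x : ℂ) * Complex.I‖ := norm_sub_le _ _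
    _ ≤ |x| + |x| := by gcongr; simp
    _ = 2 * |x| := by ring

lemma norm_compExp_le_two_mul_sq (x : ℝ) : ‖compExp x‖ ≤ 2 * x ^ 2 := by
  have hnorm : ‖(x : ℂ) * Complex.I‖ = |x| := by simp
  rcases le_total |x| 1 with h | h
  · have hexp := Complex.norm_exp_sub_one_sub_id_le (hnorm.trans_le h)
    rw [hnorm, sq_abs] at hexp
    exact hexp.trans (by nlinarith [sq_nonneg x])
  · exact (norm_compExp_le_two_mul_abs x).trans (by nlinarith [sq_abs x])

lemma norm_compExp_mul_le (θ : ℝ) {v : ℝ} (hv : 0 ≤ v) :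
    ‖compExp (θ * v)‖ ≤ 2 * (1 + θ ^ 2) * min v (v ^ 2) := by
  have hlin := norm_compExp_le_two_mul_abs (θ * v)
  have hsq := norm_compExp_le_two_mul_sq (θ * v)
  rw [abs_mul, abs_of_nonneg hv] at hlin
  have hθ : |θ| ≤ 1 + θ ^ 2 := by nlinarith [sq_abs θ, sq_nonneg (|θ| - 1)]
  rw [mul_min_of_nonneg _ _ (by positivity)]
  exact le_min (by nlinarith) (by nlinarith [sq_nonneg v])

lemma stronglyMeasurable_compExp_mul (θ : ℝ) : StronglyMeasurable fun v ↦ compExp (θ * v) :=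
  (continuous_compExp.comp (continuous_const_mul θ)).stronglyMeasurable

lemma integrable_min_sq_muU (hγ₁ : 1 < γ) (hγ₂ : γ < 2) :
    Integrable (fun u ↦ min u (u ^ 2)) (muU γ) := by
  simpa using integrable_min_rpow_muU hγ₁ hγ₂

lemma continuous_stableExponent (hγ₁ : 1 < γ) (hγ₂ : γ < 2) : Continuous (stableExponent γ) := by
  refine continuous_iff_continuousAt.2 fun θ₀ ↦ ?_
  have hbdd : ∀ᶠ θ in 𝓝 θ₀, 2 * (1 + θ ^ 2) ≤ 2 * (1 + θ₀ ^ 2) + 1 :=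
    (by fun_prop : Continuous fun θ : ℝ ↦ 2 * (1 + θ ^ 2)).continuousAt.eventually_le_const
      (lt_add_one _)
  refine continuousAt_of_dominated (bound := fun u ↦ (2 * (1 + θ₀ ^ 2) + 1) * min u (u ^ 2))
    (.of_forall fun θ ↦ (stronglyMeasurable_compExp_mul θ).aestronglyMeasurable) ?_
    ((integrable_min_sq_muU hγ₁ hγ₂).const_mul _) (.of_forall fun u ↦ ?_)
  · filter_upwards [hbdd] with θ hθ
    filter_upwards [ae_pos_muU γ] with u hu
    exact (norm_compExp_mul_le θ hu.le).trans
      (mul_le_mul_of_nonneg_right hθ (le_min hu.le (sq_nonneg u)))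
  · exact (continuous_compExp.comp (continuous_mul_const u)).continuousAt

lemma stableExponent_eq_setIntegral (γ θ : ℝ) :
    stableExponent γ θ = ∫ u in Ioi (0 : ℝ),
      (Complex.exp (θ * u * Complex.I) - 1 - θ * u * Complex.I) * ((u ^ (-γ - 1) : ℝ) : ℂ) := by
  simp only [stableExponent, integral_muU, compExp, Complex.real_smul, Complex.ofReal_mul,
    mul_comm]

lemma tendsto_exp_mul_integral_compExp_muEllR (hγ₁ : 1 < γ) (hγ₂ : γ < 2) {FR : Measure ℝ}
    [SFinite FR] [NeZero FR] (hpos : ∀ᵐ r ∂FR, 0 < r) (hmom : Integrable (fun r ↦ r ^ γ) FR)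
    (Q : ℂ) (θ : ℝ) :
    Tendsto (fun t ↦ Complex.exp
        (Q * ∫ v, compExp (θ * (((∫ r, r ^ γ ∂FR) * t) ^ (-1 / γ) * v)) ∂muEllR γ t FR)) atTop
      (𝓝 (Complex.exp (Q * stableExponent γ θ))) :=
  ((tendsto_integral_comp_mul_muEllR hγ₁ hγ₂ (stronglyMeasurable_compExp_mul θ)
    (fun _ hv ↦ norm_compExp_mul_le θ hv) hpos hmom).const_mul Q).cexp

lemma charFun_map_const_mul_eq_exp_integral_compExp {Ω : Type*} [MeasurableSpace Ω]
    {P : Measure Ω} {X : Ω → ℝ} (hX : AEMeasurable X P) {Q : ℂ} {μ : Measure ℝ}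
    (hchar : ∀ θ : ℝ, ∫ ω, Complex.exp (θ * X ω * Complex.I) ∂P =
      Complex.exp (Q * ∫ v, (Complex.exp (θ * v * Complex.I) - 1 - θ * v * Complex.I) ∂μ))
    (c θ : ℝ) :
    charFun (P.map fun ω ↦ c * X ω) θ = Complex.exp (Q * ∫ v, compExp (θ * (c * v)) ∂μ) := by
  rw [charFun_apply_real, integral_map (hX.const_mul c) (by fun_prop)]
  simpa only [compExp, Complex.ofReal_mul, mul_assoc] using hchar (θ * c)

end StableExponent

/-- Limit theorem: `(E[R^γ] t)^{-1/γ} Y_t` converges in distribution, as `t → ∞`, to a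
random variable `S` with characteristic function
`E e^{iθS} = exp(Q ∫_0^∞ (e^{iθu} - 1 - iθu) u^{-γ-1} du)`. -/
theorem stmt_0 (γ Q : ℝ) (hγ1 : 1 < γ) (hγ2 : γ < 2) (hQ : 0 < Q)
    (FR : Measure ℝ) [IsProbabilityMeasure FR] (hFRpos : FR (Set.Iic 0) = 0)
    (hmom : Integrable (fun r => r ^ γ) FR)
    (Ω : Type*) [MeasurableSpace Ω] (P : Measure Ω) [IsProbabilityMeasure P]
    (Y : ℝ → Ω → ℝ) (hYmeas : ∀ t, Measurable (Y t))
    (hYchar : ∀ t : ℝ, 0 < t → ∀ θ : ℝ,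
      ∫ ω, Complex.exp (θ * Y t ω * Complex.I) ∂P
        = Complex.exp (Q * ∫ v, (Complex.exp (θ * v * Complex.I) - 1 - θ * v * Complex.I)
            ∂(muEllR γ t FR))) :
    ∃ μS : Measure ℝ, IsProbabilityMeasure μS ∧
      (∀ θ : ℝ, ∫ x, Complex.exp (θ * x * Complex.I) ∂μS
          = Complex.exp (Q * ∫ u in Set.Ioi (0 : ℝ),
              (Complex.exp (θ * u * Complex.I) - 1 - θ * u * Complex.I)
                * ((u ^ (-γ - 1) : ℝ) : ℂ))) ∧
      ∀ f : BoundedContinuousFunction ℝ ℝ,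
        Tendsto (fun t => ∫ ω, f ((((∫ r, r ^ γ ∂FR) * t) ^ (-1 / γ)) * Y t ω) ∂P)
          atTop (𝓝 (∫ x, f x ∂μS)) := by
  have hpos : ∀ᵐ r ∂FR, 0 < r := by
    filter_upwards [measure_eq_zero_iff_ae_notMem.1 hFRpos] with r hr using notMem_Iic.1 hr
  set κ : ℝ → ℝ := fun t ↦ ((∫ r, r ^ γ ∂FR) * t) ^ (-1 / γ)
  have hmeas : ∀ t, Measurable fun ω ↦ κ t * Y t ω := fun t ↦ (hYmeas t).const_mul (κ t)
  let law : ℝ → ProbabilityMeasure ℝ := fun t ↦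
    ⟨P.map fun ω ↦ κ t * Y t ω, Measure.isProbabilityMeasure_map (hmeas t).aemeasurable⟩
  have hφ : Continuous fun θ ↦ Complex.exp (Q * stableExponent γ θ) :=
    ((continuous_stableExponent hγ1 hγ2).const_mul (Q : ℂ)).cexp
  obtain ⟨ν, hνφ, hν⟩ := exists_tendsto_of_tendsto_charFun (μ := law) hφ.continuousAt fun θ ↦ by
    refine (tendsto_exp_mul_integral_compExp_muEllR hγ1 hγ2 hpos hmom Q θ).congr' ?_
    filter_upwards [eventually_gt_atTop 0] with t ht
    exact (charFun_map_const_mul_eq_exp_integral_compExp (hYmeas t).aemeasurable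
      (hYchar t ht) (κ t) θ).symm
  refine ⟨ν, inferInstance, fun θ ↦ ?_, fun f ↦ ?_⟩
  · rw [← stableExponent_eq_setIntegral, ← charFun_apply_real, hνφ]
  · refine (ProbabilityMeasure.tendsto_iff_forall_integral_tendsto.1 hν f).congr fun t ↦ ?_
    exact integral_map (hmeas t).aemeasurable f.continuous.aestronglyMeasurable
end

section
/- Let ρ : (0,∞) → (0,∞) satisfy ρ(t)/t^{1/γ} → ∞ and ρ(t)/t → 0 as t → ∞. Then P(Y_t ≥ ρ(t)) = D · t · ρ(t)^{−γ} · (1 + o(1)) as t → ∞, where D := Q·E[R^γ]/γ; equivalently, P(Y_t ≥ ρ(t)) / (t·ρ(t)^{−γ}) → Q·E[R^γ]/γ. -/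
open MeasureTheory Filter Set
open scoped ENNReal NNReal Topology

/-!
Split the Lévy measure of `Y_t` at the level `ε * ρ t`. The large jumps have finite total mass `λ`
and contribute a centred compound Poisson law, whose uncentred version dominates the measure
`exp (-λ) • (δ₀ + ν)` of at most one jump. This single inequality gives the lower bound for the
tail, and, applied to the complementary set, the upper bound up to an error `λ ^ 2`. The small jumps
are negligible because their variance is small, which is read off the characteristic function; their
infinite intensity is reached by truncation at `1 / n` and Lévy's continuity theorem.

After division by `ρ t` the Lévy measure is dominated by a power tail of size
`η = t * ρ t ^ (-γ) → 0`, so that `λ ^ 2 = O(η ^ 2)` is of smaller order than the tail itself, and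
the small-jump error is `O(η * ε ^ (2 - γ))`. It remains to find the tail of the telecom measure:
integrating over the starting time of a session gives it in closed form, and the sessions already
active at time `0` drop out of the limit because `ρ t / t → 0`.
-/

section CompoundPoisson

open scoped Nat

variable {E : Type*} [MeasurableSpace E]

/-- The `k`-fold convolution power `ν ∗ ⋯ ∗ ν`, with `ν^{∗0} = δ₀`. -/
noncomputable def convPow [AddMonoid E] (ν : Measure E) : ℕ → Measure E
  | 0 => Measure.dirac 0
  | k + 1 => ν ∗ convPow ν k

/-- The compound Poisson law with finite jump measure `ν`: the law of a sum of `N` independent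
jumps distributed as `ν / ν(E)`, where `N` is Poisson of mean `ν(E)`. The powers of `ν` are left
unnormalised, so that `ν = 0` needs no special treatment. -/
noncomputable def compoundPoisson [AddMonoid E] (ν : Measure E) : Measure E :=
  Measure.sum fun k : ℕ ↦ ENNReal.ofReal (Real.exp (-ν.real univ) / k !) • convPow ν k

section AddMonoid

variable [AddMonoid E] (ν : Measure E) [IsFiniteMeasure ν]

lemma convPow_one [MeasurableAdd₂ E] : convPow ν 1 = ν := by
  simp [convPow]

instance isFiniteMeasure_convPow [MeasurableAdd₂ E] (k : ℕ) : IsFiniteMeasure (convPow ν k) := by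
  induction k with
  | zero => exact inferInstanceAs (IsFiniteMeasure (Measure.dirac 0))
  | succ k ih => exact inferInstanceAs (IsFiniteMeasure (ν ∗ convPow ν k))

lemma convPow_univ [MeasurableAdd₂ E] (k : ℕ) : convPow ν k univ = ν univ ^ k := by
  induction k with
  | zero => simp [convPow]
  | succ k ih =>
    rw [convPow, Measure.conv, Measure.map_apply measurable_add .univ, preimage_univ,
      Measure.prod_apply .univ]
    simp [ih, pow_succ]

instance isProbabilityMeasure_compoundPoisson [MeasurableAdd₂ E] :
    IsProbabilityMeasure (compoundPoisson ν) := by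
  have hsum : HasSum (fun k : ℕ ↦ Real.exp (-ν.real univ) * ν.real univ ^ k / k !) 1 :=
    ProbabilityTheory.hasSum_one_poissonMeasure (ν univ).toNNReal
  refine ⟨?_⟩
  calc compoundPoisson ν univ
      = ∑' k : ℕ, ENNReal.ofReal (Real.exp (-ν.real univ) * ν.real univ ^ k / k !) := by
        rw [compoundPoisson, Measure.sum_apply _ .univ]
        refine tsum_congr fun k ↦ ?_
        rw [Measure.smul_apply, convPow_univ, smul_eq_mul, ← ofReal_measureReal,
          ← ENNReal.ofReal_pow measureReal_nonneg, ← ENNReal.ofReal_mul (by positivity),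
          div_mul_eq_mul_div]
    _ = 1 := by
        rw [← ENNReal.ofReal_tsum_of_nonneg (fun k ↦ by positivity) hsum.summable, hsum.tsum_eq,
          ENNReal.ofReal_one]

lemma exp_smul_dirac_add_le_compoundPoisson [MeasurableAdd₂ E] :
    ENNReal.ofReal (Real.exp (-ν.real univ)) • (Measure.dirac 0 + ν) ≤ compoundPoisson ν := by
  refine Measure.le_iff.2 fun s hs ↦ ?_
  rw [compoundPoisson, Measure.sum_apply _ hs]
  refine le_of_eq_of_le ?_ (ENNReal.sum_le_tsum {0, 1})
  rw [Finset.sum_pair zero_ne_one, convPow_one]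
  simp [convPow]

lemma exp_mul_measureReal_dirac_add_le_compoundPoisson [MeasurableAdd₂ E] (s : Set E) :
    Real.exp (-ν.real univ) * ((Measure.dirac 0).real s + ν.real s)
      ≤ (compoundPoisson ν).real s := by
  have h := ENNReal.toReal_mono (measure_ne_top _ _) (exp_smul_dirac_add_le_compoundPoisson ν s)
  rwa [Measure.smul_apply, smul_eq_mul, ENNReal.toReal_mul,
    ENNReal.toReal_ofReal (Real.exp_nonneg _), ← Measure.real, measureReal_add_apply] at h

lemma exp_mul_measureReal_le_compoundPoisson [MeasurableAdd₂ E] (s : Set E) :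
    Real.exp (-ν.real univ) * ν.real s ≤ (compoundPoisson ν).real s :=
  (mul_le_mul_of_nonneg_left (le_add_of_nonneg_left measureReal_nonneg)
    (Real.exp_nonneg _)).trans (exp_mul_measureReal_dirac_add_le_compoundPoisson ν s)

lemma measureReal_compoundPoisson_le [MeasurableAdd₂ E] {s : Set E} (hs : MeasurableSet s)
    (h0 : 0 ∉ s) : (compoundPoisson ν).real s ≤ ν.real s + ν.real univ ^ 2 := by
  -- `0 ∈ sᶜ`, so the lower bound on `sᶜ` keeps the no-jump atom `exp (-ν univ) • δ₀`.
  have hcompl := exp_mul_measureReal_dirac_add_le_compoundPoisson ν sᶜ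
  have hdirac : (Measure.dirac (0 : E)).real s = 0 := by simp [measureReal_def, hs, h0]
  simp only [measureReal_compl hs, probReal_univ, hdirac] at hcompl
  have hexp : Real.exp (-ν.real univ) ≤ 1 := by simp
  have hs0 : 0 ≤ ν.real s := measureReal_nonneg
  have huniv : 0 ≤ ν.real univ := measureReal_nonneg
  nlinarith [Real.add_one_le_exp (-ν.real univ)]

end AddMonoid

section CharFun

variable [NormedAddCommGroup E] [InnerProductSpace ℝ E] [BorelSpace E]
  [SecondCountableTopology E] (ν : Measure E) [IsFiniteMeasure ν]

lemma charFun_convPow (k : ℕ) (θ : E) : charFun (convPow ν k) θ = charFun ν θ ^ k := by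
  induction k with
  | zero => simp [convPow]
  | succ k ih => rw [convPow, charFun_conv, ih, pow_succ']

lemma charFun_compoundPoisson (θ : E) :
    charFun (compoundPoisson ν) θ = Complex.exp (charFun ν θ - ν.real univ) := by
  have hint : Integrable (fun x ↦ Complex.exp (inner ℝ x θ * Complex.I)) (compoundPoisson ν) :=
    .of_bound (by fun_prop) 1 (.of_forall fun x ↦ (Complex.norm_exp_ofReal_mul_I _).le)
  have hexp := (NormedSpace.expSeries_div_hasSum_exp (charFun ν θ)).mul_left
    (Complex.exp (-ν.real univ))
  rw [← Complex.exp_eq_exp_ℂ, ← Complex.exp_add, neg_add_eq_sub] at hexp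
  refine (hasSum_integral_measure hint).unique (hexp.congr_fun fun k ↦ ?_)
  rw [integral_smul_measure, ← charFun_apply, charFun_convPow,
    ENNReal.toReal_ofReal (by positivity), Complex.real_smul]
  push_cast
  ring

end CharFun

end CompoundPoisson

section CompensatedPoisson

/-- The integrand `e^{ix} - 1 - ix` of the Lévy–Khintchine exponent of a fully compensated Poisson
integral. -/
noncomputable def compensatedExp (x : ℝ) : ℂ := Complex.exp (x * Complex.I) - 1 - x * Complex.I

lemma continuous_compensatedExp : Continuous compensatedExp := by
  unfold compensatedExp; fun_prop

@[simp]
lemma compensatedExp_zero : compensatedExp 0 = 0 := by simp [compensatedExp]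

lemma norm_compensatedExp_le_abs (x : ℝ) : ‖compensatedExp x‖ ≤ 2 * |x| := by
  have hexp : ‖Complex.exp (x * Complex.I) - 1‖ ≤ |x| := by
    simpa [mul_comm] using Real.norm_exp_I_mul_ofReal_sub_one_le (x := x)
  calc ‖compensatedExp x‖ ≤ ‖Complex.exp (x * Complex.I) - 1‖ + ‖x * Complex.I‖ := norm_sub_le _ _
    _ ≤ 2 * |x| := by rw [norm_mul, Complex.norm_I, Complex.norm_real, Real.norm_eq_abs]; linarith

lemma norm_compensatedExp_le_sq (x : ℝ) : ‖compensatedExp x‖ ≤ 2 * x ^ 2 := by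
  rcases le_total |x| 1 with hx | hx
  · have h := Complex.norm_exp_sub_one_sub_id_le (x := x * Complex.I) (by simpa using hx)
    rw [norm_mul, Complex.norm_I, Complex.norm_real, Real.norm_eq_abs, mul_one, sq_abs] at h
    exact h.trans (by linarith [sq_nonneg x])
  · exact (norm_compensatedExp_le_abs x).trans (by nlinarith [sq_abs x])

/-- `π` is the law of a Poisson integral `∫ v (N(dv) - ν(dv))` with intensity `ν`, compensated on
all of `ℝ`, as expressed by its characteristic function. The jump measure `ν` may be infinite
near `0`. -/
def IsCompensatedPoisson (ν π : Measure ℝ) : Prop :=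
  ∀ θ : ℝ, charFun π θ = Complex.exp (∫ v, compensatedExp (θ * v) ∂ν)

lemma IsCompensatedPoisson.norm_one_sub_charFun_le {ν π : Measure ℝ} [IsProbabilityMeasure π]
    (h : IsCompensatedPoisson ν π) (hν : Integrable (fun v ↦ v ^ 2) ν) (θ : ℝ) :
    ‖1 - charFun π θ‖ ≤ 4 * (∫ v, v ^ 2 ∂ν) * θ ^ 2 := by
  have hexponent : ‖∫ v, compensatedExp (θ * v) ∂ν‖ ≤ 2 * θ ^ 2 * ∫ v, v ^ 2 ∂ν := by
    rw [← integral_const_mul]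
    refine norm_integral_le_of_norm_le (hν.const_mul _) (.of_forall fun v ↦ ?_)
    exact (norm_compensatedExp_le_sq _).trans_eq (by ring)
  suffices ‖1 - charFun π θ‖ ≤ 2 * ‖∫ v, compensatedExp (θ * v) ∂ν‖ by linarith
  rcases le_total ‖∫ v, compensatedExp (θ * v) ∂ν‖ 1 with hle | hge
  · rw [norm_sub_rev, h]
    exact Complex.norm_exp_sub_one_le hle
  · calc ‖1 - charFun π θ‖ ≤ ‖(1 : ℂ)‖ + ‖charFun π θ‖ := norm_sub_le _ _
      _ ≤ 2 * ‖∫ v, compensatedExp (θ * v) ∂ν‖ := by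
        linarith [norm_charFun_le_one (μ := π) θ, norm_one (α := ℂ)]

lemma measureReal_abs_gt_le_of_norm_one_sub_charFun_le {π : Measure ℝ} [IsProbabilityMeasure π]
    {c d : ℝ} (h : ∀ θ, ‖1 - charFun π θ‖ ≤ c * θ ^ 2) (hd : 0 < d) :
    π.real {x | d < |x|} ≤ 8 * c / d ^ 2 := by
  have hc : 0 ≤ c := by simpa using (norm_nonneg _).trans (h 1)
  have hd' : 0 < d⁻¹ := inv_pos.2 hd
  have hbound : ‖∫ θ in (-2 * d⁻¹)..(2 * d⁻¹), 1 - charFun π θ‖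
      ≤ c * (2 * d⁻¹) ^ 2 * |2 * d⁻¹ - -2 * d⁻¹| := by
    refine intervalIntegral.norm_integral_le_of_norm_le_const fun θ hθ ↦ (h θ).trans ?_
    rw [uIoc_of_le (by linarith)] at hθ
    gcongr c * ?_
    exact sq_le_sq' (by linarith [hθ.1]) hθ.2
  rw [abs_of_nonneg (by linarith)] at hbound
  calc π.real {x | d < |x|}
      ≤ 2⁻¹ * d * ‖∫ θ in (-2 * d⁻¹)..(2 * d⁻¹), 1 - charFun π θ‖ :=
        measureReal_abs_gt_le_integral_charFun hd
    _ ≤ 2⁻¹ * d * (c * (2 * d⁻¹) ^ 2 * (2 * d⁻¹ - -2 * d⁻¹)) := by gcongr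
    _ = 8 * c / d ^ 2 := by field_simp; ring

lemma IsCompensatedPoisson.measureReal_abs_gt_le {ν π : Measure ℝ} [IsProbabilityMeasure π]
    (h : IsCompensatedPoisson ν π) (hν : Integrable (fun v ↦ v ^ 2) ν) {d : ℝ} (hd : 0 < d) :
    π.real {x | d < |x|} ≤ 32 * (∫ v, v ^ 2 ∂ν) / d ^ 2 :=
  (measureReal_abs_gt_le_of_norm_one_sub_charFun_le (h.norm_one_sub_charFun_le hν) hd).trans_eq
    (by ring)

/-- The compound Poisson law with finite jump measure `ν`, centred by its drift `∫ v ∂ν`. -/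
noncomputable def compensatedPoisson (ν : Measure ℝ) : Measure ℝ :=
  (compoundPoisson ν).map (· + -∫ v, v ∂ν)

instance isProbabilityMeasure_compensatedPoisson (ν : Measure ℝ) [IsFiniteMeasure ν] :
    IsProbabilityMeasure (compensatedPoisson ν) :=
  Measure.isProbabilityMeasure_map (by fun_prop)

lemma compensatedPoisson_real_Ici (ν : Measure ℝ) (x : ℝ) :
    (compensatedPoisson ν).real (Ici x) = (compoundPoisson ν).real (Ici (x + ∫ v, v ∂ν)) := by
  rw [compensatedPoisson, map_measureReal_apply (by fun_prop) measurableSet_Ici,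
    preimage_add_const_Ici, sub_neg_eq_add]

lemma isCompensatedPoisson_compensatedPoisson {ν : Measure ℝ} [IsFiniteMeasure ν]
    (hν : Integrable (fun v ↦ v) ν) : IsCompensatedPoisson ν (compensatedPoisson ν) := by
  intro θ
  have hexp : Integrable (fun v : ℝ ↦ Complex.exp (θ * v * Complex.I)) ν :=
    .of_bound (by fun_prop) 1 (.of_forall fun v ↦ by
      exact_mod_cast (Complex.norm_exp_ofReal_mul_I (θ * v)).le)
  have hlin : Integrable (fun v : ℝ ↦ (θ * v * Complex.I : ℂ)) ν :=
    (hν.ofReal.const_mul _).mul_const _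
  rw [compensatedPoisson, charFun_map_add_const, charFun_compoundPoisson, ← Complex.exp_add]
  congr 1
  simp only [compensatedExp, Complex.ofReal_mul]
  rw [integral_sub (by exact hexp.sub (integrable_const _)) hlin,
    integral_sub hexp (integrable_const _), integral_mul_const, integral_const_mul,
    charFun_apply_real, integral_complex_ofReal]
  simp
  ring

end CompensatedPoisson

section Convolution

variable (μ σ : Measure ℝ) [IsProbabilityMeasure μ] [IsProbabilityMeasure σ] (x d : ℝ)

lemma conv_real_Ici_le :
    (μ ∗ σ).real (Ici x) ≤ μ.real (Ici (x - d)) + σ.real {y | d < |y|} := by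
  have hsub : (fun p : ℝ × ℝ ↦ p.1 + p.2) ⁻¹' Ici x
      ⊆ Ici (x - d) ×ˢ univ ∪ univ ×ˢ {y | d < |y|} := by
    rintro ⟨y, z⟩ (h : x ≤ y + z)
    rcases lt_or_ge d |z| with hz | hz
    · exact .inr ⟨trivial, hz⟩
    · exact .inl ⟨by simp only [mem_Ici]; linarith [le_abs_self z], trivial⟩
  calc (μ ∗ σ).real (Ici x) = (μ.prod σ).real ((fun p : ℝ × ℝ ↦ p.1 + p.2) ⁻¹' Ici x) :=
        map_measureReal_apply (by fun_prop) measurableSet_Ici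
    _ ≤ (μ.prod σ).real (Ici (x - d) ×ˢ univ) + (μ.prod σ).real (univ ×ˢ {y | d < |y|}) :=
        (measureReal_mono hsub).trans (measureReal_union_le _ _)
    _ = μ.real (Ici (x - d)) + σ.real {y | d < |y|} := by simp [measureReal_prod_prod]

lemma mul_one_sub_le_conv_real_Ici :
    μ.real (Ici (x + d)) * (1 - σ.real {y | d < |y|}) ≤ (μ ∗ σ).real (Ici x) := by
  have hsub : Ici (x + d) ×ˢ {y | d < |y|}ᶜ ⊆ (fun p : ℝ × ℝ ↦ p.1 + p.2) ⁻¹' Ici x := by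
    rintro ⟨y, z⟩ ⟨hy : x + d ≤ y, hz⟩
    simp only [mem_compl_iff, mem_ofPred_eq, not_lt] at hz
    simp only [mem_preimage, mem_Ici]
    linarith [neg_abs_le z]
  calc μ.real (Ici (x + d)) * (1 - σ.real {y | d < |y|})
      = (μ.prod σ).real (Ici (x + d) ×ˢ {y | d < |y|}ᶜ) := by
        rw [measureReal_prod_prod,
          probReal_compl_eq_one_sub (measurableSet_lt (by fun_prop) (by fun_prop))]
    _ ≤ (μ.prod σ).real ((fun p : ℝ × ℝ ↦ p.1 + p.2) ⁻¹' Ici x) := measureReal_mono hsub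
    _ = (μ ∗ σ).real (Ici x) :=
        (map_measureReal_apply (by fun_prop) measurableSet_Ici).symm

variable (ν : Measure ℝ) [IsFiniteMeasure ν]

lemma compensatedPoisson_conv_real_Ici_le (hmean : 0 ≤ ∫ v, v ∂ν) (hx : 0 < x - d) :
    (compensatedPoisson ν ∗ σ).real (Ici x)
      ≤ ν.real (Ici (x - d)) + ν.real univ ^ 2 + σ.real {y | d < |y|} := by
  refine (conv_real_Ici_le _ σ x d).trans (add_le_add_left ?_ _)
  rw [compensatedPoisson_real_Ici]
  exact (measureReal_mono (Ici_subset_Ici.2 (le_add_of_nonneg_right hmean))).trans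
    (measureReal_compoundPoisson_le ν measurableSet_Ici hx.not_ge)

lemma mul_le_compensatedPoisson_conv_real_Ici :
    Real.exp (-ν.real univ) * ν.real (Ici (x + d + ∫ v, v ∂ν)) * (1 - σ.real {y | d < |y|})
      ≤ (compensatedPoisson ν ∗ σ).real (Ici x) := by
  refine le_trans ?_ (mul_one_sub_le_conv_real_Ici _ σ x d)
  rw [compensatedPoisson_real_Ici]
  exact mul_le_mul_of_nonneg_right (exp_mul_measureReal_le_compoundPoisson ν _)
    (sub_nonneg.2 measureReal_le_one)

end Convolution

section Portmanteau

variable {Ω ι : Type*} [MeasurableSpace Ω] [TopologicalSpace Ω] [OpensMeasurableSpace Ω]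
  [HasOuterApproxClosed Ω] {l : Filter ι} [l.NeBot] {p : ι → ProbabilityMeasure Ω}
  {p₀ : ProbabilityMeasure Ω} {s : Set Ω} {c : ℝ}

lemma measureReal_le_of_tendsto_of_isOpen (hp : Tendsto p l (𝓝 p₀)) (hs : IsOpen s)
    (hle : ∀ᶠ i in l, (p i : Measure Ω).real s ≤ c) : (p₀ : Measure Ω).real s ≤ c := by
  obtain ⟨i, hi⟩ := hle.exists
  refine ENNReal.toReal_le_of_le_ofReal (measureReal_nonneg.trans hi) ?_
  refine (ProbabilityMeasure.le_liminf_measure_open_of_tendsto hp hs).trans ?_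
  refine liminf_le_of_frequently_le (hle.mono fun i hi ↦ ?_).frequently
  exact (ofReal_measureReal (measure_ne_top _ _)).symm.trans_le (ENNReal.ofReal_le_ofReal hi)

lemma le_measureReal_of_tendsto_of_isClosed (hp : Tendsto p l (𝓝 p₀)) (hs : IsClosed s)
    (hle : ∀ᶠ i in l, c ≤ (p i : Measure Ω).real s) : c ≤ (p₀ : Measure Ω).real s := by
  have hcompl := measureReal_le_of_tendsto_of_isOpen (c := 1 - c) hp hs.isOpen_compl
    (hle.mono fun i hi ↦ by rw [probReal_compl_eq_one_sub hs.measurableSet]; linarith)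
  rw [probReal_compl_eq_one_sub hs.measurableSet] at hcompl
  linarith

end Portmanteau

section Truncation

variable {μ : Measure ℝ}

lemma measurableSet_le_abs (ε : ℝ) : MeasurableSet {v : ℝ | ε ≤ |v|} :=
  measurableSet_le measurable_const (by fun_prop)

lemma tendsto_setIntegral_le_abs {G ι : Type*} [NormedAddCommGroup G] [NormedSpace ℝ G]
    {f : ℝ → G} (hf : Integrable f μ) (h0 : f 0 = 0) {l : Filter ι} [l.IsCountablyGenerated]
    {ε : ι → ℝ} (hε : Tendsto ε l (𝓝 0)) :
    Tendsto (fun i ↦ ∫ v in {v | ε i ≤ |v|}, f v ∂μ) l (𝓝 (∫ v, f v ∂μ)) := by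
  simp_rw [← integral_indicator (measurableSet_le_abs _)]
  refine tendsto_integral_filter_of_dominated_convergence (fun v ↦ ‖f v‖)
    (.of_forall fun i ↦ hf.aestronglyMeasurable.indicator (measurableSet_le_abs _))
    (.of_forall fun i ↦ .of_forall fun v ↦ norm_indicator_le_norm_self _ _) hf.norm
    (.of_forall fun v ↦ tendsto_nhds_of_eventually_eq ?_)
  rcases eq_or_ne v 0 with rfl | hv
  · simp [h0]
  · filter_upwards [hε.eventually_le_const (abs_pos.2 hv)] with i hi
    exact indicator_of_mem (s := {v | ε i ≤ |v|}) hi f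

lemma isFiniteMeasure_restrict_le_abs (hμ : Integrable (fun v ↦ v ^ 2) μ) {ε : ℝ} (hε : 0 < ε) :
    IsFiniteMeasure (μ.restrict {v | ε ≤ |v|}) := by
  refine isFiniteMeasure_restrict.2 (ne_top_of_le_ne_top
    (hμ.measure_norm_ge_lt_top (pow_pos hε 2)).ne (measure_mono fun v (hv : ε ≤ |v|) ↦ ?_))
  simpa using pow_le_pow_left₀ hε.le hv 2

lemma integrable_restrict_le_abs (hμ : Integrable (fun v ↦ v ^ 2) μ) {ε : ℝ} (hε : 0 < ε) :
    Integrable (fun v ↦ v) (μ.restrict {v | ε ≤ |v|}) := by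
  refine (hμ.restrict.div_const ε).mono' (by fun_prop) ?_
  filter_upwards [ae_restrict_mem (measurableSet_le_abs ε)] with v (hv : ε ≤ |v|)
  rw [Real.norm_eq_abs, le_div_iff₀ hε, ← sq_abs v, sq]
  gcongr

lemma integrable_compensatedExp_of_sq (hμ : Integrable (fun v ↦ v ^ 2) μ) (θ : ℝ) :
    Integrable (fun v ↦ compensatedExp (θ * v)) μ :=
  (hμ.const_mul (2 * θ ^ 2)).mono'
    (continuous_compensatedExp.comp (by fun_prop)).aestronglyMeasurable
    (.of_forall fun v ↦ (norm_compensatedExp_le_sq _).trans_eq (by ring))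

lemma integrable_compensatedExp_of_id (hμ : Integrable (fun v ↦ v) μ) (θ : ℝ) :
    Integrable (fun v ↦ compensatedExp (θ * v)) μ :=
  (hμ.abs.const_mul (2 * |θ|)).mono'
    (continuous_compensatedExp.comp (by fun_prop)).aestronglyMeasurable
    (.of_forall fun v ↦ (norm_compensatedExp_le_abs _).trans_eq (by rw [abs_mul]; ring))

end Truncation

section JumpSplitting

variable {ν₁ ν₂ π : Measure ℝ} [IsFiniteMeasure ν₁] [IsProbabilityMeasure π]

lemma IsCompensatedPoisson.exists_tendsto_conv (hπ : IsCompensatedPoisson (ν₁ + ν₂) π)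
    (h₁ : Integrable (fun v ↦ v) ν₁) (h₂ : Integrable (fun v ↦ v ^ 2) ν₂) :
    ∃ σ : ℕ → ProbabilityMeasure ℝ,
      (∀ n d, 0 < d → (σ n : Measure ℝ).real {y | d < |y|} ≤ 32 * (∫ v, v ^ 2 ∂ν₂) / d ^ 2) ∧
      Tendsto (β := ProbabilityMeasure ℝ) (fun n ↦ ⟨compensatedPoisson ν₁ ∗ σ n, inferInstance⟩)
        atTop (𝓝 ⟨π, ‹_›⟩) := by
  let ε : ℕ → ℝ := fun n ↦ 1 / (n + 1)
  have hε : ∀ n, 0 < ε n := fun n ↦ Nat.one_div_pos_of_nat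
  have hfin (n) := isFiniteMeasure_restrict_le_abs h₂ (hε n)
  have hlaw (n) : IsCompensatedPoisson _ (compensatedPoisson (ν₂.restrict {v | ε n ≤ |v|})) :=
    isCompensatedPoisson_compensatedPoisson (integrable_restrict_le_abs h₂ (hε n))
  refine ⟨fun n ↦ ⟨compensatedPoisson (ν₂.restrict {v | ε n ≤ |v|}), inferInstance⟩,
    fun n d hd ↦ ?_, ProbabilityMeasure.tendsto_of_tendsto_charFun fun θ ↦ ?_⟩
  · refine ((hlaw n).measureReal_abs_gt_le h₂.restrict hd).trans ?_
    gcongr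
    · exact .of_forall fun v ↦ sq_nonneg v
    · exact Measure.restrict_le_self
  · have hlim := tendsto_setIntegral_le_abs (integrable_compensatedExp_of_sq h₂ θ) (by simp)
      tendsto_one_div_add_atTop_nhds_zero_nat
    have hlimit : charFun π θ = Complex.exp (∫ v, compensatedExp (θ * v) ∂ν₁)
        * Complex.exp (∫ v, compensatedExp (θ * v) ∂ν₂) := by
      rw [hπ, integral_add_measure (integrable_compensatedExp_of_id h₁ θ)
        (integrable_compensatedExp_of_sq h₂ θ), Complex.exp_add]
    have happrox (n) :
        charFun (compensatedPoisson ν₁ ∗ compensatedPoisson (ν₂.restrict {v | ε n ≤ |v|})) θ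
          = Complex.exp (∫ v, compensatedExp (θ * v) ∂ν₁)
            * Complex.exp (∫ v in {v | ε n ≤ |v|}, compensatedExp (θ * v) ∂ν₂) := by
      rw [charFun_conv, isCompensatedPoisson_compensatedPoisson h₁ θ, hlaw n θ]
    refine Tendsto.congr (fun n ↦ (happrox n).symm) ?_
    exact hlimit.symm ▸ hlim.cexp.const_mul _

lemma IsCompensatedPoisson.real_Ici_le (hπ : IsCompensatedPoisson (ν₁ + ν₂) π)
    (h₁ : Integrable (fun v ↦ v) ν₁) (h₂ : Integrable (fun v ↦ v ^ 2) ν₂)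
    (hmean : 0 ≤ ∫ v, v ∂ν₁) {x d : ℝ} (hd : 0 < d) (hx : 0 < x - 2 * d) :
    π.real (Ici x)
      ≤ ν₁.real (Ici (x - 2 * d)) + ν₁.real univ ^ 2 + 32 * (∫ v, v ^ 2 ∂ν₂) / d ^ 2 := by
  obtain ⟨σ, hσ, hlim⟩ := hπ.exists_tendsto_conv h₁ h₂
  have hsub : Ici x ⊆ Ioi (x - d) := Ici_subset_Ioi.2 (by linarith)
  refine (measureReal_mono hsub).trans
    (measureReal_le_of_tendsto_of_isOpen hlim isOpen_Ioi (.of_forall fun n ↦ ?_))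
  calc (compensatedPoisson ν₁ ∗ σ n).real (Ioi (x - d))
      ≤ (compensatedPoisson ν₁ ∗ σ n).real (Ici (x - d)) := measureReal_mono Ioi_subset_Ici_self
    _ ≤ ν₁.real (Ici (x - d - d)) + ν₁.real univ ^ 2 + (σ n : Measure ℝ).real {y | d < |y|} :=
        compensatedPoisson_conv_real_Ici_le _ _ _ _ hmean (by linarith)
    _ ≤ _ := by rw [sub_sub, ← two_mul]; gcongr; exact hσ n d hd

lemma IsCompensatedPoisson.le_real_Ici (hπ : IsCompensatedPoisson (ν₁ + ν₂) π)
    (h₁ : Integrable (fun v ↦ v) ν₁) (h₂ : Integrable (fun v ↦ v ^ 2) ν₂)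
    (x : ℝ) {d : ℝ} (hd : 0 < d) :
    Real.exp (-ν₁.real univ) * ν₁.real (Ici (x + d + ∫ v, v ∂ν₁))
      * (1 - 32 * (∫ v, v ^ 2 ∂ν₂) / d ^ 2) ≤ π.real (Ici x) := by
  obtain ⟨σ, hσ, hlim⟩ := hπ.exists_tendsto_conv h₁ h₂
  refine le_measureReal_of_tendsto_of_isClosed hlim isClosed_Ici (.of_forall fun n ↦ ?_)
  refine le_trans ?_ (mul_le_compensatedPoisson_conv_real_Ici (σ n) x d ν₁)
  gcongr
  exact hσ n d hd

end JumpSplitting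

section PowerTail

lemma lintegral_Ioc_rpow {q a : ℝ} (hq : -1 < q) (ha : 0 ≤ a) :
    ∫⁻ t in Ioc 0 a, ENNReal.ofReal (t ^ q) = ENNReal.ofReal (a ^ (q + 1) / (q + 1)) := by
  have hint : IntegrableOn (fun t : ℝ ↦ t ^ q) (Ioc 0 a) :=
    (intervalIntegrable_iff_integrableOn_Ioc_of_le ha).1
      (intervalIntegral.intervalIntegrable_rpow' hq)
  rw [← ofReal_integral_eq_lintegral_ofReal hint, ← intervalIntegral.integral_of_le ha,
    integral_rpow (.inl hq), Real.zero_rpow (by linarith), sub_zero]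
  filter_upwards [ae_restrict_mem measurableSet_Ioc] with t ht using Real.rpow_nonneg ht.1.le q

lemma lintegral_Ioi_rpow {q a : ℝ} (hq : q < -1) (ha : 0 < a) :
    ∫⁻ t in Ioi a, ENNReal.ofReal (t ^ q) = ENNReal.ofReal (-a ^ (q + 1) / (q + 1)) := by
  rw [← ofReal_integral_eq_lintegral_ofReal (integrableOn_Ioi_rpow_of_lt hq ha),
    integral_Ioi_rpow_of_lt hq ha]
  filter_upwards [ae_restrict_mem measurableSet_Ioi] with t (ht : a < t)
    using Real.rpow_nonneg (ha.trans ht).le q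

lemma integrable_and_integral_le_of_lintegral_le {α : Type*} [MeasurableSpace α] {μ : Measure α}
    {f : α → ℝ} {c : ℝ} (hf : AEStronglyMeasurable f μ) (hf0 : 0 ≤ᵐ[μ] f) (hc : 0 ≤ c)
    (hle : ∫⁻ x, ENNReal.ofReal (f x) ∂μ ≤ ENNReal.ofReal c) :
    Integrable f μ ∧ ∫ x, f x ∂μ ≤ c := by
  refine ⟨⟨hf, ?_⟩, ?_⟩
  · rw [hasFiniteIntegral_iff_ofReal hf0]
    exact hle.trans_lt ENNReal.ofReal_lt_top
  · rw [integral_eq_lintegral_of_nonneg_ae hf0 hf]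
    exact ENNReal.toReal_le_of_le_ofReal hc hle

lemma lintegral_rpow_eq_lintegral_Ioc_add_lintegral_Ioi {μ : Measure ℝ} (hμ : ∀ᵐ v ∂μ, 0 ≤ v)
    {p a : ℝ} (hp : 0 < p) (ha : 0 ≤ a) :
    ∫⁻ v, ENNReal.ofReal (v ^ p) ∂μ = ENNReal.ofReal p *
      ((∫⁻ t in Ioc 0 a, μ (Ici t) * ENNReal.ofReal (t ^ (p - 1)))
        + ∫⁻ t in Ioi a, μ (Ici t) * ENNReal.ofReal (t ^ (p - 1))) := by
  rw [lintegral_rpow_eq_lintegral_meas_le_mul μ hμ aemeasurable_id hp,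
    ← Ioc_union_Ioi_eq_Ioi ha, lintegral_union measurableSet_Ioi (Ioc_disjoint_Ioi le_rfl)]
  rfl

/-- `ν` lives on `(0, ∞)` and its tail is dominated by the power law `K y ^ (-γ)`. -/
structure PowerTailBound (ν : Measure ℝ) (γ K : ℝ) : Prop where
  nonneg : 0 ≤ K
  measure_Iic_zero : ν (Iic 0) = 0
  measure_Ici_le : ∀ y, 0 < y → ν (Ici y) ≤ ENNReal.ofReal (K * y ^ (-γ))

namespace PowerTailBound

variable {ν : Measure ℝ} {γ K : ℝ} (h : PowerTailBound ν γ K) {p a : ℝ}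
include h

lemma ae_pos : ∀ᵐ v ∂ν, 0 < v := by
  filter_upwards [measure_eq_zero_iff_ae_notMem.1 h.measure_Iic_zero] with v hv
  exact not_le.1 hv

lemma measureReal_Ici_le (ha : 0 < a) : ν.real (Ici a) ≤ K * a ^ (-γ) :=
  ENNReal.toReal_le_of_le_ofReal (mul_nonneg h.nonneg (Real.rpow_nonneg ha.le _))
    (h.measure_Ici_le a ha)

lemma isFiniteMeasure_restrict_Ici (ha : 0 < a) : IsFiniteMeasure (ν.restrict (Ici a)) :=
  isFiniteMeasure_restrict.2 ((h.measure_Ici_le a ha).trans_lt ENNReal.ofReal_lt_top).ne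

lemma measure_Ici_mul_rpow_le (p : ℝ) {t : ℝ} (ht : 0 < t) :
    ν (Ici t) * ENNReal.ofReal (t ^ (p - 1))
      ≤ ENNReal.ofReal K * ENNReal.ofReal (t ^ (p - γ - 1)) :=
  calc ν (Ici t) * ENNReal.ofReal (t ^ (p - 1))
      ≤ ENNReal.ofReal (K * t ^ (-γ)) * ENNReal.ofReal (t ^ (p - 1)) := by
        gcongr; exact h.measure_Ici_le t ht
    _ = ENNReal.ofReal K * ENNReal.ofReal (t ^ (p - γ - 1)) := by
        rw [ENNReal.ofReal_mul h.nonneg, mul_assoc, ← ENNReal.ofReal_mul (by positivity),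
          ← Real.rpow_add ht]
        ring_nf

lemma lintegral_Iio_rpow_le (hp : 0 < p) (hγp : γ < p) (ha : 0 < a) :
    ∫⁻ v in Iio a, ENNReal.ofReal (v ^ p) ∂ν
      ≤ ENNReal.ofReal (p * K / (p - γ) * a ^ (p - γ)) := by
  have htail : ∀ t ∈ Ioi a, ν.restrict (Iio a) (Ici t) * ENNReal.ofReal (t ^ (p - 1)) = 0 := by
    intro t (ht : a < t)
    rw [Measure.restrict_apply measurableSet_Ici,
      ((Iio_disjoint_Ici ht.le).symm).inter_eq, measure_empty, zero_mul]
  calc ∫⁻ v in Iio a, ENNReal.ofReal (v ^ p) ∂ν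
      = ENNReal.ofReal p *
          ∫⁻ t in Ioc 0 a, ν.restrict (Iio a) (Ici t) * ENNReal.ofReal (t ^ (p - 1)) := by
        rw [lintegral_rpow_eq_lintegral_Ioc_add_lintegral_Ioi
          (ae_restrict_of_ae (h.ae_pos.mono fun v hv ↦ hv.le)) hp ha.le,
          setLIntegral_congr_fun measurableSet_Ioi htail, lintegral_zero, add_zero]
    _ ≤ ENNReal.ofReal p *
          ∫⁻ t in Ioc 0 a, ENNReal.ofReal K * ENNReal.ofReal (t ^ (p - γ - 1)) := by
        gcongr ENNReal.ofReal p * ?_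
        refine setLIntegral_mono' measurableSet_Ioc fun t ht ↦ ?_
        refine le_trans ?_ (h.measure_Ici_mul_rpow_le p ht.1)
        gcongr
        exact Measure.restrict_le_self
    _ = ENNReal.ofReal (p * K / (p - γ) * a ^ (p - γ)) := by
        rw [lintegral_const_mul' _ _ ENNReal.ofReal_ne_top,
          lintegral_Ioc_rpow (by linarith) ha.le, sub_add_cancel,
          ← ENNReal.ofReal_mul h.nonneg, ← ENNReal.ofReal_mul hp.le]
        ring_nf

lemma lintegral_Ici_rpow_le (hp : 0 < p) (hpγ : p < γ) (ha : 0 < a) :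
    ∫⁻ v in Ici a, ENNReal.ofReal (v ^ p) ∂ν
      ≤ ENNReal.ofReal (γ * K / (γ - p) * a ^ (p - γ)) := by
  have hK := h.nonneg
  have hγp : 0 < γ - p := sub_pos.2 hpγ
  have hlow : ∫⁻ t in Ioc 0 a, ν.restrict (Ici a) (Ici t) * ENNReal.ofReal (t ^ (p - 1))
      ≤ ENNReal.ofReal (K * a ^ (-γ)) * ENNReal.ofReal (a ^ p / p) := by
    calc _ ≤ ∫⁻ t in Ioc 0 a, ENNReal.ofReal (K * a ^ (-γ)) * ENNReal.ofReal (t ^ (p - 1)) := by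
          gcongr with t
          exact ((measure_mono (subset_univ _)).trans_eq (Measure.restrict_apply_univ _)).trans
            (h.measure_Ici_le a ha)
      _ = _ := by
          rw [lintegral_const_mul' _ _ ENNReal.ofReal_ne_top,
            lintegral_Ioc_rpow (by linarith) ha.le, sub_add_cancel]
  have hhigh : ∫⁻ t in Ioi a, ν.restrict (Ici a) (Ici t) * ENNReal.ofReal (t ^ (p - 1))
      ≤ ENNReal.ofReal K * ENNReal.ofReal (a ^ (p - γ) / (γ - p)) := by
    calc _ ≤ ∫⁻ t in Ioi a, ENNReal.ofReal K * ENNReal.ofReal (t ^ (p - γ - 1)) := by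
          refine setLIntegral_mono' measurableSet_Ioi fun t ht ↦ ?_
          refine le_trans ?_ (h.measure_Ici_mul_rpow_le p (ha.trans ht))
          gcongr
          exact Measure.restrict_le_self
      _ = _ := by
          rw [lintegral_const_mul' _ _ ENNReal.ofReal_ne_top, lintegral_Ioi_rpow (by linarith) ha,
            sub_add_cancel, ← neg_sub γ p, neg_div_neg_eq]
  rw [lintegral_rpow_eq_lintegral_Ioc_add_lintegral_Ioi
    (ae_restrict_of_ae (h.ae_pos.mono fun v hv ↦ hv.le)) hp ha.le]
  refine (mul_le_mul_right (add_le_add hlow hhigh) _).trans_eq ?_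
  rw [← ENNReal.ofReal_mul (by positivity), ← ENNReal.ofReal_mul hK,
    ← ENNReal.ofReal_add (by positivity) (by positivity), ← ENNReal.ofReal_mul hp.le,
    show p - γ = -γ + p by ring, Real.rpow_add ha]
  congr 1
  field_simp
  ring

lemma integrableOn_Iio_rpow_and_setIntegral_le (hp : 0 < p) (hγp : γ < p) (ha : 0 < a) :
    IntegrableOn (fun v ↦ v ^ p) (Iio a) ν
      ∧ ∫ v in Iio a, v ^ p ∂ν ≤ p * K / (p - γ) * a ^ (p - γ) := by
  have := h.nonneg
  have : 0 < p - γ := sub_pos.2 hγp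
  exact integrable_and_integral_le_of_lintegral_le (by fun_prop)
    (ae_restrict_of_ae (h.ae_pos.mono fun v hv ↦ Real.rpow_nonneg hv.le p)) (by positivity)
    (h.lintegral_Iio_rpow_le hp hγp ha)

lemma integrableOn_Ici_rpow_and_setIntegral_le (hp : 0 < p) (hpγ : p < γ) (ha : 0 < a) :
    IntegrableOn (fun v ↦ v ^ p) (Ici a) ν
      ∧ ∫ v in Ici a, v ^ p ∂ν ≤ γ * K / (γ - p) * a ^ (p - γ) := by
  have := h.nonneg
  have : 0 < γ := hp.trans hpγ
  have : 0 < γ - p := sub_pos.2 hpγ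
  exact integrable_and_integral_le_of_lintegral_le (by fun_prop)
    (ae_restrict_of_ae (h.ae_pos.mono fun v hv ↦ Real.rpow_nonneg hv.le p)) (by positivity)
    (h.lintegral_Ici_rpow_le hp hpγ ha)

end PowerTailBound

end PowerTail

section SingleBigJump

lemma IsCompensatedPoisson.map_mul {ν π : Measure ℝ} (h : IsCompensatedPoisson ν π) (c : ℝ) :
    IsCompensatedPoisson (ν.map (c * ·)) (π.map (c * ·)) := fun θ ↦ by
  have hcont : Continuous fun v ↦ compensatedExp (θ * v) :=
    continuous_compensatedExp.comp (by fun_prop)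
  rw [charFun_map_mul, h, integral_map (by fun_prop) hcont.aestronglyMeasurable]
  congr! 4 with v
  ring

lemma preimage_mul_Ici {c : ℝ} (hc : 0 < c) (y : ℝ) : (c * ·) ⁻¹' Ici y = Ici (y / c) := by
  ext v
  simp [div_le_iff₀' hc]

lemma PowerTailBound.map_mul {ν : Measure ℝ} {γ K c : ℝ} (h : PowerTailBound ν γ K) (hc : 0 < c) :
    PowerTailBound (ν.map (c * ·)) γ (K * c ^ γ) where
  nonneg := mul_nonneg h.nonneg (Real.rpow_nonneg hc.le γ)
  measure_Iic_zero := by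
    have : (c * ·) ⁻¹' Iic (0 : ℝ) = Iic 0 := by ext v; simp [hc]
    rw [Measure.map_apply (by fun_prop) measurableSet_Iic, this, h.measure_Iic_zero]
  measure_Ici_le y hy := by
    rw [Measure.map_apply (by fun_prop) measurableSet_Ici, preimage_mul_Ici hc]
    refine (h.measure_Ici_le _ (div_pos hy hc)).trans_eq ?_
    rw [Real.div_rpow hy.le hc.le, Real.rpow_neg hc.le, div_inv_eq_mul]
    ring_nf

lemma PowerTailBound.smul {ν : Measure ℝ} {γ K c : ℝ} (h : PowerTailBound ν γ K) (hc : 0 ≤ c) :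
    PowerTailBound (ENNReal.ofReal c • ν) γ (c * K) where
  nonneg := mul_nonneg hc h.nonneg
  measure_Iic_zero := by rw [Measure.smul_apply, h.measure_Iic_zero, smul_zero]
  measure_Ici_le y hy := by
    rw [Measure.smul_apply, smul_eq_mul, mul_assoc, ENNReal.ofReal_mul hc]
    gcongr
    exact h.measure_Ici_le y hy

lemma PowerTailBound.real_Ici_one_le {ν π : Measure ℝ} [IsProbabilityMeasure π] {γ K ε δ : ℝ}
    (h : PowerTailBound ν γ K) (hπ : IsCompensatedPoisson ν π) (hγ1 : 1 < γ) (hγ2 : γ < 2)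
    (hε : 0 < ε) (hδ : 0 < δ) (hεδ : ε ≤ 1 - 2 * δ) :
    π.real (Ici 1) ≤ ν.real (Ici (1 - 2 * δ)) + (K * ε ^ (-γ)) ^ 2
      + 32 * (2 * K / (2 - γ) * ε ^ (2 - γ)) / δ ^ 2 := by
  have := h.isFiniteMeasure_restrict_Ici hε
  have hbig := (h.integrableOn_Ici_rpow_and_setIntegral_le one_pos hγ1 hε).1
  have hsmall := h.integrableOn_Iio_rpow_and_setIntegral_le two_pos hγ2 hε
  simp only [Real.rpow_one, Real.rpow_ofNat, ← compl_Ici] at hbig hsmall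
  rw [← ν.restrict_add_restrict_compl (measurableSet_Ici (a := ε))] at hπ
  refine (hπ.real_Ici_le hbig hsmall.1 ?_ hδ (hε.trans_le hεδ)).trans ?_
  · exact setIntegral_nonneg measurableSet_Ici fun v hv ↦ hε.le.trans hv
  · rw [measureReal_restrict_apply measurableSet_Ici, measureReal_restrict_apply_univ,
      inter_eq_left.2 (Ici_subset_Ici.2 hεδ)]
    gcongr
    exacts [h.measureReal_Ici_le hε, hsmall.2]

lemma PowerTailBound.le_real_Ici_one {ν π : Measure ℝ} [IsProbabilityMeasure π] {γ K δ : ℝ}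
    (h : PowerTailBound ν γ K) (hπ : IsCompensatedPoisson ν π) (hγ1 : 1 < γ) (hγ2 : γ < 2)
    (hδ : 0 < δ) (hmean : γ * K / (γ - 1) ≤ δ) (hvar : 32 * (2 * K / (2 - γ)) / δ ^ 2 ≤ 1) :
    Real.exp (-K) * ν.real (Ici (1 + 2 * δ)) * (1 - 32 * (2 * K / (2 - γ)) / δ ^ 2)
      ≤ π.real (Ici 1) := by
  have := h.isFiniteMeasure_restrict_Ici one_pos
  have hmass := h.measureReal_Ici_le one_pos
  have hbig := h.integrableOn_Ici_rpow_and_setIntegral_le one_pos hγ1 one_pos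
  have hsmall := h.integrableOn_Iio_rpow_and_setIntegral_le two_pos hγ2 one_pos
  simp only [Real.rpow_one, Real.rpow_ofNat, ← compl_Ici, Real.one_rpow, mul_one]
    at hmass hbig hsmall
  have hbig0 : 0 ≤ ∫ v in Ici (1 : ℝ), v ∂ν :=
    setIntegral_nonneg measurableSet_Ici fun v hv ↦ zero_le_one.trans hv
  rw [← ν.restrict_add_restrict_compl (measurableSet_Ici (a := 1))] at hπ
  refine le_trans ?_ (hπ.le_real_Ici hbig.1 hsmall.1 1 hδ)
  have htail : ν.real (Ici (1 + 2 * δ))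
      ≤ (ν.restrict (Ici 1)).real (Ici (1 + δ + ∫ v in Ici 1, v ∂ν)) := by
    rw [measureReal_restrict_apply measurableSet_Ici,
      inter_eq_left.2 (Ici_subset_Ici.2 (by linarith))]
    refine measureReal_mono (Ici_subset_Ici.2 (by linarith)) ?_
    exact ((h.measure_Ici_le _ (by positivity)).trans_lt ENNReal.ofReal_lt_top).ne
  rw [measureReal_restrict_apply_univ]
  gcongr
  exact hsmall.2

variable {ι : Type*} {l : Filter ι} {ν π : ι → Measure ℝ} [∀ i, IsProbabilityMeasure (π i)]
  {γ K : ℝ} {η : ι → ℝ} {κ : ℝ → ℝ}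

lemma eventually_measureReal_Ici_one_div_lt (hγ1 : 1 < γ) (hγ2 : γ < 2)
    (hlaw : ∀ᶠ i in l, IsCompensatedPoisson (ν i) (π i))
    (hbound : ∀ᶠ i in l, PowerTailBound (ν i) γ (K * η i)) (hη0 : ∀ᶠ i in l, 0 < η i)
    (hη : Tendsto η l (𝓝 0))
    (htail : ∀ c > 0, Tendsto (fun i ↦ (ν i).real (Ici c) / η i) l (𝓝 (κ c)))
    (hκ : ContinuousAt κ 1) {b : ℝ} (hb : κ 1 < b) :
    ∀ᶠ i in l, (π i).real (Ici 1) / η i < b := by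
  have hγ : 0 < 2 - γ := sub_pos.2 hγ2
  obtain ⟨δ, hδb, hδ0, hδ4⟩ : ∃ δ, κ (1 - 2 * δ) < b ∧ 0 < δ ∧ δ < 1 / 4 := by
    have hcont : ContinuousAt (fun δ : ℝ ↦ κ (1 - 2 * δ)) 0 :=
      ContinuousAt.comp (by simpa using hκ) (by fun_prop)
    exact (((hcont.eventually_lt_const (by simpa using hb)).filter_mono nhdsWithin_le_nhds).and
      (Ioo_mem_nhdsGT (by norm_num))).exists
  obtain ⟨ε, hεb, hε0, hε4⟩ : ∃ ε : ℝ, κ (1 - 2 * δ)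
      + 32 * (2 * K / (2 - γ) * ε ^ (2 - γ)) / δ ^ 2 < b ∧ 0 < ε ∧ ε < 1 / 2 := by
    have hpow : ContinuousAt (fun ε : ℝ ↦ ε ^ (2 - γ)) 0 := by fun_prop (disch := simp [hγ.le])
    have hcont : ContinuousAt (fun ε : ℝ ↦ κ (1 - 2 * δ)
      + 32 * (2 * K / (2 - γ) * ε ^ (2 - γ)) / δ ^ 2) 0 := by fun_prop
    exact (((hcont.eventually_lt_const (by simpa [Real.zero_rpow hγ.ne'] using hδb)).filter_mono
      nhdsWithin_le_nhds).and (Ioo_mem_nhdsGT (by norm_num))).exists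
  have hlim : Tendsto (fun i ↦ (ν i).real (Ici (1 - 2 * δ)) / η i + (K * ε ^ (-γ)) ^ 2 * η i
      + 32 * (2 * K / (2 - γ) * ε ^ (2 - γ)) / δ ^ 2) l
      (𝓝 (κ (1 - 2 * δ) + (K * ε ^ (-γ)) ^ 2 * 0
        + 32 * (2 * K / (2 - γ) * ε ^ (2 - γ)) / δ ^ 2)) :=
    ((htail _ (by linarith)).add (hη.const_mul _)).add_const _
  rw [mul_zero, add_zero] at hlim
  filter_upwards [hlaw, hbound, hη0, hlim.eventually_lt_const hεb] with i hlaw hbound hη0 hlt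
  refine ((div_le_div_of_nonneg_right (hbound.real_Ici_one_le hlaw hγ1 hγ2 hε0 hδ0 (by linarith))
    hη0.le).trans_eq ?_).trans_lt hlt
  field_simp

lemma eventually_lt_measureReal_Ici_one_div (hγ1 : 1 < γ) (hγ2 : γ < 2)
    (hlaw : ∀ᶠ i in l, IsCompensatedPoisson (ν i) (π i))
    (hbound : ∀ᶠ i in l, PowerTailBound (ν i) γ (K * η i)) (hη0 : ∀ᶠ i in l, 0 < η i)
    (hη : Tendsto η l (𝓝 0))
    (htail : ∀ c > 0, Tendsto (fun i ↦ (ν i).real (Ici c) / η i) l (𝓝 (κ c)))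
    (hκ : ContinuousAt κ 1) {b : ℝ} (hb : b < κ 1) :
    ∀ᶠ i in l, b < (π i).real (Ici 1) / η i := by
  obtain ⟨δ, hδb, hδ0⟩ : ∃ δ, b < κ (1 + 2 * δ) ∧ 0 < δ := by
    have hcont : ContinuousAt (fun δ : ℝ ↦ κ (1 + 2 * δ)) 0 :=
      ContinuousAt.comp (by simpa using hκ) (by fun_prop)
    exact (((hcont.eventually_const_lt (by simpa using hb)).filter_mono nhdsWithin_le_nhds).and
      (self_mem_nhdsWithin (s := Ioi (0 : ℝ)))).exists
  have hmass : Tendsto (fun i ↦ K * η i) l (𝓝 0) := by simpa using hη.const_mul K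
  have hmean : Tendsto (fun i ↦ γ * (K * η i) / (γ - 1)) l (𝓝 0) := by
    simpa using (hmass.const_mul γ).div_const (γ - 1)
  have hvar : Tendsto (fun i ↦ 32 * (2 * (K * η i) / (2 - γ)) / δ ^ 2) l (𝓝 0) := by
    simpa using (((hmass.const_mul 2).div_const (2 - γ)).const_mul 32).div_const (δ ^ 2)
  have hexp : Tendsto (fun i ↦ Real.exp (-(K * η i))) l (𝓝 1) := by
    simpa using hmass.neg.rexp
  have hlim : Tendsto (fun i ↦ Real.exp (-(K * η i)) * ((ν i).real (Ici (1 + 2 * δ)) / η i)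
      * (1 - 32 * (2 * (K * η i) / (2 - γ)) / δ ^ 2)) l (𝓝 (κ (1 + 2 * δ))) := by
    simpa using (hexp.mul (htail _ (by positivity))).mul (hvar.const_sub 1)
  filter_upwards [hlaw, hbound, hη0, hlim.eventually_const_lt hδb,
    hmean.eventually_le_const hδ0, hvar.eventually_le_const one_pos]
    with i hlaw hbound hη0 hlt hmean hvar
  refine hlt.trans_le ((le_of_eq ?_).trans (div_le_div_of_nonneg_right
    (hbound.le_real_Ici_one hlaw hγ1 hγ2 hδ0 hmean hvar) hη0.le))
  ring

theorem tendsto_measureReal_Ici_one_div (hγ1 : 1 < γ) (hγ2 : γ < 2)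
    (hlaw : ∀ᶠ i in l, IsCompensatedPoisson (ν i) (π i))
    (hbound : ∀ᶠ i in l, PowerTailBound (ν i) γ (K * η i)) (hη0 : ∀ᶠ i in l, 0 < η i)
    (hη : Tendsto η l (𝓝 0))
    (htail : ∀ c > 0, Tendsto (fun i ↦ (ν i).real (Ici c) / η i) l (𝓝 (κ c)))
    (hκ : ContinuousAt κ 1) :
    Tendsto (fun i ↦ (π i).real (Ici 1) / η i) l (𝓝 (κ 1)) :=
  tendsto_order.2
    ⟨fun _ ↦ eventually_lt_measureReal_Ici_one_div hγ1 hγ2 hlaw hbound hη0 hη htail hκ,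
      fun _ ↦ eventually_measureReal_Ici_one_div_lt hγ1 hγ2 hlaw hbound hη0 hη htail hκ⟩

theorem tendsto_measureReal_Ici_div {s r : ι → ℝ} (hγ1 : 1 < γ) (hγ2 : γ < 2)
    (hlaw : ∀ᶠ i in l, IsCompensatedPoisson (ν i) (π i))
    (hbound : ∀ᶠ i in l, PowerTailBound (ν i) γ (K * s i)) (hs0 : ∀ᶠ i in l, 0 < s i)
    (hr0 : ∀ᶠ i in l, 0 < r i) (hsr : Tendsto (fun i ↦ s i * r i ^ (-γ)) l (𝓝 0))
    (htail : ∀ c > 0,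
      Tendsto (fun i ↦ (ν i).real (Ici (c * r i)) / (s i * r i ^ (-γ))) l (𝓝 (κ c)))
    (hκ : ContinuousAt κ 1) :
    Tendsto (fun i ↦ (π i).real (Ici (r i)) / (s i * r i ^ (-γ))) l (𝓝 (κ 1)) := by
  have hscale (μ : Measure ℝ) {i : ι} (hr : 0 < r i) (c : ℝ) :
      (μ.map ((r i)⁻¹ * ·)).real (Ici c) = μ.real (Ici (c * r i)) := by
    rw [map_measureReal_apply (by fun_prop) measurableSet_Ici, preimage_mul_Ici (inv_pos.2 hr),
      div_inv_eq_mul]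
  have hprob (i) : IsProbabilityMeasure ((π i).map ((r i)⁻¹ * ·)) :=
    Measure.isProbabilityMeasure_map (by fun_prop)
  have hbound' : ∀ᶠ i in l,
      PowerTailBound ((ν i).map ((r i)⁻¹ * ·)) γ (K * (s i * r i ^ (-γ))) := by
    filter_upwards [hbound, hr0] with i hbound hr
    convert hbound.map_mul (inv_pos.2 hr) using 1
    rw [Real.inv_rpow hr.le, Real.rpow_neg hr.le, mul_assoc]
  have hη0 : ∀ᶠ i in l, 0 < s i * r i ^ (-γ) := by
    filter_upwards [hs0, hr0] with i hs hr
    positivity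
  refine (tendsto_measureReal_Ici_one_div (π := fun i ↦ (π i).map ((r i)⁻¹ * ·)) hγ1 hγ2
    (hlaw.mono fun i h ↦ h.map_mul (r i)⁻¹) hbound' hη0 hsr (fun c hc ↦ ?_) hκ).congr' ?_
  · refine (htail c hc).congr' ?_
    filter_upwards [hr0] with i hr
    rw [hscale _ hr]
  · filter_upwards [hr0] with i hr
    rw [hscale _ hr, one_mul]

end SingleBigJump

section Telecom

instance sFinite_muU (γ : ℝ) : SFinite (muU γ) := by
  unfold muU
  infer_instance

instance sFinite_muEll (γ t : ℝ) : SFinite (muEll γ t) := by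
  unfold muEll
  infer_instance

variable {γ t y : ℝ}

lemma muU_Ici (hγ : 0 < γ) {a : ℝ} (ha : 0 < a) :
    muU γ (Ici a) = ENNReal.ofReal (a ^ (-γ) / γ) := by
  rw [muU, withDensity_apply _ measurableSet_Ici, Measure.restrict_restrict measurableSet_Ici,
    inter_eq_self_of_subset_left (Ici_subset_Ioi.2 ha), setLIntegral_congr Ioi_ae_eq_Ici.symm,
    lintegral_Ioi_rpow (by linarith) ha, sub_add_cancel, neg_div_neg_eq]

lemma measurable_ellK_s1 (t : ℝ) : Measurable fun p : ℝ × ℝ ↦ ellK t p.1 p.2 := by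
  unfold ellK
  fun_prop

lemma le_ellK_iff (hy : 0 < y) {s u : ℝ} :
    y ≤ ellK t s u ↔ y - min s 0 ≤ u ∧ s ≤ t - y ∧ y ≤ t := by
  simp only [ellK, le_max_iff, hy.not_ge, false_or, le_sub_iff_add_le, le_min_iff]
  rcases le_total s 0 with hs | hs
  · simp only [max_eq_right hs, min_eq_left hs]
    exact ⟨fun h ↦ ⟨by linarith, by linarith, by linarith⟩, fun h ↦ ⟨by linarith, by linarith⟩⟩
  · simp only [max_eq_left hs, min_eq_right hs]
    exact ⟨fun h ↦ ⟨by linarith, by linarith, by linarith⟩, fun h ↦ ⟨by linarith, by linarith⟩⟩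

lemma muEll_Ici_eq_lintegral (hy : 0 < y) :
    muEll γ t (Ici y) = ∫⁻ s, muU γ {u | y - min s 0 ≤ u ∧ s ≤ t - y ∧ y ≤ t} := by
  rw [muEll, Measure.restrict_apply measurableSet_Ici,
    inter_eq_self_of_subset_left (Ici_subset_Ioi.2 hy),
    Measure.map_apply (measurable_ellK_s1 t) measurableSet_Ici,
    Measure.prod_apply (measurable_ellK_s1 t measurableSet_Ici)]
  refine lintegral_congr fun s ↦ congrArg (muU γ) (Set.ext fun u ↦ ?_)
  exact le_ellK_iff hy

lemma setLIntegral_Iic_zero_comp_sub (f : ℝ → ℝ≥0∞) (y : ℝ) :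
    ∫⁻ s in Iic 0, f (y - s) = ∫⁻ z in Ici y, f z := by
  have := (Measure.measurePreserving_sub_left volume y).setLIntegral_comp_preimage_emb
    (Homeomorph.subLeft y).measurableEmbedding f (Ici y)
  rwa [preimage_const_sub_Ici, sub_self] at this

/-- The tail of `muEll γ t` at `z * t`, in units of `t * (z * t) ^ (-γ)`. The first term comes from
the sessions which are active at time `0`, the second from those which start later. -/
noncomputable def lengthTailFactor (γ z : ℝ) : ℝ :=
  if z ≤ 1 then z / (γ * (γ - 1)) + (1 - z) / γ else 0

lemma lengthTailFactor_nonneg (hγ : 1 < γ) {z : ℝ} (hz : 0 < z) : 0 ≤ lengthTailFactor γ z := by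
  have : 0 < γ - 1 := sub_pos.2 hγ
  unfold lengthTailFactor
  split_ifs with h
  · have : 0 ≤ 1 - z := sub_nonneg.2 h
    positivity
  · exact le_rfl

lemma lengthTailFactor_le (hγ : 1 < γ) {z : ℝ} (hz : 0 < z) :
    lengthTailFactor γ z ≤ 1 / (γ - 1) := by
  have hγ' : 0 < γ - 1 := sub_pos.2 hγ
  unfold lengthTailFactor
  split_ifs with h
  · calc z / (γ * (γ - 1)) + (1 - z) / γ ≤ 1 / (γ * (γ - 1)) + 1 / γ := by
          gcongr
          linarith
      _ = 1 / (γ - 1) := by field_simp; ring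
  · positivity

lemma tendsto_lengthTailFactor (γ : ℝ) : Tendsto (lengthTailFactor γ) (𝓝 0) (𝓝 (1 / γ)) := by
  have hcont : ContinuousAt (fun z ↦ z / (γ * (γ - 1)) + (1 - z) / γ) 0 := by fun_prop
  have hlim := hcont.tendsto
  rw [zero_div, zero_add, sub_zero] at hlim
  refine hlim.congr' ?_
  filter_upwards [eventually_le_nhds one_pos] with z hz using (if_pos hz).symm

lemma measurable_lengthTailFactor (γ : ℝ) : Measurable (lengthTailFactor γ) :=
  .ite measurableSet_Iic (by fun_prop) measurable_const

lemma setLIntegral_Iic_zero_muU_Ici (hγ : 1 < γ) (hy : 0 < y) :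
    ∫⁻ s in Iic 0, muU γ (Ici (y - s)) = ENNReal.ofReal (y ^ (-γ) * (y / (γ * (γ - 1)))) := by
  have hγ0 : 0 < γ := one_pos.trans hγ
  calc ∫⁻ s in Iic 0, muU γ (Ici (y - s))
      = ∫⁻ z in Ioi y, muU γ (Ici z) := by
        rw [setLIntegral_Iic_zero_comp_sub fun z ↦ muU γ (Ici z), setLIntegral_congr Ioi_ae_eq_Ici]
    _ = ∫⁻ z in Ioi y, ENNReal.ofReal (1 / γ) * ENNReal.ofReal (z ^ (-γ)) := by
        refine setLIntegral_congr_fun measurableSet_Ioi fun z (hz : y < z) ↦ ?_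
        rw [muU_Ici hγ0 (hy.trans hz), ← ENNReal.ofReal_mul (by positivity),
          one_div_mul_eq_div]
    _ = ENNReal.ofReal (y ^ (-γ) * (y / (γ * (γ - 1)))) := by
        rw [lintegral_const_mul' _ _ ENNReal.ofReal_ne_top,
          lintegral_Ioi_rpow (by linarith) hy, ← ENNReal.ofReal_mul (by positivity),
          Real.rpow_add_one hy.ne', neg_add_eq_sub, ← neg_sub γ 1, neg_div_neg_eq,
          div_mul_div_comm, one_mul, mul_div_assoc]

lemma muEll_Ici (hγ : 1 < γ) (ht : 0 < t) (hy : 0 < y) :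
    muEll γ t (Ici y) = ENNReal.ofReal (t * y ^ (-γ) * lengthTailFactor γ (y / t)) := by
  have hγ0 : 0 < γ := one_pos.trans hγ
  have : 0 < γ - 1 := sub_pos.2 hγ
  rw [muEll_Ici_eq_lintegral hy]
  by_cases hyt : y ≤ t
  swap
  · simp [lengthTailFactor, hyt, div_le_one ht]
  have : 0 ≤ t - y := sub_nonneg.2 hyt
  have hsec : (fun s ↦ muU γ {u | y - min s 0 ≤ u ∧ s ≤ t - y ∧ y ≤ t})
      = (Iic (t - y)).indicator fun s ↦ muU γ (Ici (y - min s 0)) := by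
    ext s
    by_cases hs : s ≤ t - y <;> simp [hs, hyt, Ici]
  rw [hsec, lintegral_indicator measurableSet_Iic, ← Iic_union_Ioc_eq_Iic (sub_nonneg.2 hyt),
    lintegral_union measurableSet_Ioc (Iic_disjoint_Ioc le_rfl)]
  have hearly : ∫⁻ s in Iic 0, muU γ (Ici (y - min s 0))
      = ENNReal.ofReal (y ^ (-γ) * (y / (γ * (γ - 1)))) := by
    rw [← setLIntegral_Iic_zero_muU_Ici hγ hy]
    refine setLIntegral_congr_fun measurableSet_Iic fun s hs ↦ ?_
    rw [min_eq_left hs]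
  have hlate : ∫⁻ s in Ioc 0 (t - y), muU γ (Ici (y - min s 0))
      = ENNReal.ofReal (y ^ (-γ) / γ * (t - y)) := by
    rw [setLIntegral_congr_fun (g := fun _ ↦ muU γ (Ici y)) measurableSet_Ioc fun s hs ↦ by
      rw [min_eq_right hs.1.le, sub_zero], setLIntegral_const, Real.volume_Ioc, sub_zero,
      muU_Ici hγ0 hy, ← ENNReal.ofReal_mul (by positivity)]
  rw [hearly, hlate, ← ENNReal.ofReal_add (by positivity) (by positivity), lengthTailFactor,
    if_pos ((div_le_one ht).2 hyt)]
  congr 1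
  field_simp

variable {FR : Measure ℝ}

/-- The tail of `muEllR γ t FR` at `z * t`, in units of `t * (z * t) ^ (-γ)`. -/
noncomputable def rewardTailFactor (γ : ℝ) (FR : Measure ℝ) (z : ℝ) : ℝ :=
  ∫ r, r ^ γ * lengthTailFactor γ (z / r) ∂FR

lemma ae_pos_of_measure_Iic_zero (hFR : FR (Iic 0) = 0) : ∀ᵐ r ∂FR, 0 < r := by
  filter_upwards [measure_eq_zero_iff_ae_notMem.1 hFR] with r hr using not_le.1 hr

lemma aestronglyMeasurable_rewardTailFactor_integrand (γ z : ℝ) :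
    AEStronglyMeasurable (fun r ↦ r ^ γ * lengthTailFactor γ (z / r)) FR :=
  Measurable.aestronglyMeasurable <| .mul (by fun_prop)
    ((measurable_lengthTailFactor γ).comp (by fun_prop))

lemma ae_rewardTailFactor_integrand_mem_Icc (hγ : 1 < γ) (hFR : FR (Iic 0) = 0) {z : ℝ}
    (hz : 0 < z) :
    ∀ᵐ r ∂FR, r ^ γ * lengthTailFactor γ (z / r) ∈ Icc 0 (r ^ γ / (γ - 1)) := by
  filter_upwards [ae_pos_of_measure_Iic_zero hFR] with r hr
  refine ⟨mul_nonneg (by positivity) (lengthTailFactor_nonneg hγ (by positivity)), ?_⟩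
  rw [div_eq_mul_one_div (r ^ γ)]
  gcongr
  exact lengthTailFactor_le hγ (by positivity)

lemma integrable_rewardTailFactor_integrand (hγ : 1 < γ) (hFR : FR (Iic 0) = 0)
    (hmom : Integrable (fun r ↦ r ^ γ) FR) {z : ℝ} (hz : 0 < z) :
    Integrable (fun r ↦ r ^ γ * lengthTailFactor γ (z / r)) FR := by
  refine (hmom.div_const (γ - 1)).mono' (aestronglyMeasurable_rewardTailFactor_integrand γ z) ?_
  filter_upwards [ae_rewardTailFactor_integrand_mem_Icc hγ hFR hz] with r hr
  exact (Real.norm_of_nonneg hr.1).trans_le hr.2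

lemma rewardTailFactor_le (hγ : 1 < γ) (hFR : FR (Iic 0) = 0)
    (hmom : Integrable (fun r ↦ r ^ γ) FR) {z : ℝ} (hz : 0 < z) :
    rewardTailFactor γ FR z ≤ (∫ r, r ^ γ ∂FR) / (γ - 1) := by
  rw [← integral_div]
  exact integral_mono_ae (integrable_rewardTailFactor_integrand hγ hFR hmom hz)
    (hmom.div_const _)
    ((ae_rewardTailFactor_integrand_mem_Icc hγ hFR hz).mono fun r hr ↦ hr.2)

lemma rewardTailFactor_nonneg (hγ : 1 < γ) (hFR : FR (Iic 0) = 0) {z : ℝ} (hz : 0 < z) :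
    0 ≤ rewardTailFactor γ FR z :=
  integral_nonneg_of_ae
    ((ae_rewardTailFactor_integrand_mem_Icc hγ hFR hz).mono fun _ hr ↦ hr.1)

lemma tendsto_rewardTailFactor (hγ : 1 < γ) (hFR : FR (Iic 0) = 0)
    (hmom : Integrable (fun r ↦ r ^ γ) FR) :
    Tendsto (rewardTailFactor γ FR) (𝓝[>] 0) (𝓝 ((∫ r, r ^ γ ∂FR) / γ)) := by
  rw [← integral_div]
  refine tendsto_integral_filter_of_dominated_convergence (fun r ↦ r ^ γ / (γ - 1))
    (.of_forall fun z ↦ aestronglyMeasurable_rewardTailFactor_integrand γ z) ?_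
    (hmom.div_const _) (.of_forall fun r ↦ ?_)
  · filter_upwards [self_mem_nhdsWithin] with z (hz : 0 < z)
    filter_upwards [ae_rewardTailFactor_integrand_mem_Icc hγ hFR hz] with r hr
    exact (Real.norm_of_nonneg hr.1).trans_le hr.2
  · have hzr : Tendsto (· / r) (𝓝[>] 0) (𝓝 0) := by
      simpa using (tendsto_id.div_const r).mono_left (nhdsWithin_le_nhds (a := (0 : ℝ)))
    simpa [div_eq_mul_inv] using ((tendsto_lengthTailFactor γ).comp hzr).const_mul (r ^ γ)

lemma muEllR_Ici [SFinite FR] (hγ : 1 < γ) (hFR : FR (Iic 0) = 0)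
    (hmom : Integrable (fun r ↦ r ^ γ) FR) (ht : 0 < t) {x : ℝ} (hx : 0 < x) :
    muEllR γ t FR (Ici x)
      = ENNReal.ofReal (t * x ^ (-γ) * rewardTailFactor γ FR (x / t)) := by
  have hmul : Measurable fun p : ℝ × ℝ ↦ p.1 * p.2 := by fun_prop
  have hxt : 0 < x / t := div_pos hx ht
  rw [muEllR, Measure.restrict_apply measurableSet_Ici,
    inter_eq_self_of_subset_left (Ici_subset_Ioi.2 hx),
    Measure.map_apply hmul measurableSet_Ici, Measure.prod_apply (hmul measurableSet_Ici)]
  calc ∫⁻ r, muEll γ t (Prod.mk r ⁻¹' ((fun p ↦ p.1 * p.2) ⁻¹' Ici x)) ∂FR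
      = ∫⁻ r, ENNReal.ofReal (t * x ^ (-γ))
          * ENNReal.ofReal (r ^ γ * lengthTailFactor γ (x / t / r)) ∂FR := by
        refine lintegral_congr_ae ?_
        filter_upwards [ae_pos_of_measure_Iic_zero hFR] with r hr
        change muEll γ t ((r * ·) ⁻¹' Ici x) = _
        rw [preimage_mul_Ici hr, muEll_Ici hγ ht (div_pos hx hr), Real.div_rpow hx.le hr.le,
          Real.rpow_neg hr.le, div_inv_eq_mul, div_right_comm x r t,
          ← ENNReal.ofReal_mul (by positivity), mul_assoc, mul_assoc, mul_assoc]
    _ = ENNReal.ofReal (t * x ^ (-γ) * rewardTailFactor γ FR (x / t)) := by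
        rw [lintegral_const_mul' _ _ ENNReal.ofReal_ne_top, rewardTailFactor,
          ← ofReal_integral_eq_lintegral_ofReal
            (integrable_rewardTailFactor_integrand hγ hFR hmom hxt)
            ((ae_rewardTailFactor_integrand_mem_Icc hγ hFR hxt).mono fun _ hr ↦ hr.1),
          ← ENNReal.ofReal_mul (by positivity)]

lemma muEllR_Iic_zero (γ t : ℝ) (FR : Measure ℝ) : muEllR γ t FR (Iic 0) = 0 := by
  rw [muEllR, Measure.restrict_apply measurableSet_Iic, Iic_inter_Ioi, Ioc_self, measure_empty]

lemma powerTailBound_muEllR [SFinite FR] (hγ : 1 < γ) (hFR : FR (Iic 0) = 0)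
    (hmom : Integrable (fun r ↦ r ^ γ) FR) (ht : 0 < t) :
    PowerTailBound (muEllR γ t FR) γ (t * ((∫ r, r ^ γ ∂FR) / (γ - 1))) where
  nonneg := mul_nonneg ht.le <|
    (rewardTailFactor_nonneg hγ hFR one_pos).trans (rewardTailFactor_le hγ hFR hmom one_pos)
  measure_Iic_zero := muEllR_Iic_zero γ t FR
  measure_Ici_le x hx := by
    rw [muEllR_Ici hγ hFR hmom ht hx, mul_right_comm]
    gcongr
    exact rewardTailFactor_le hγ hFR hmom (div_pos hx ht)

lemma measureReal_muEllR_Ici [SFinite FR] (hγ : 1 < γ) (hFR : FR (Iic 0) = 0)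
    (hmom : Integrable (fun r ↦ r ^ γ) FR) (ht : 0 < t) {x : ℝ} (hx : 0 < x) :
    (muEllR γ t FR).real (Ici x) = t * x ^ (-γ) * rewardTailFactor γ FR (x / t) := by
  have := rewardTailFactor_nonneg (FR := FR) hγ hFR (div_pos hx ht)
  rw [measureReal_def, muEllR_Ici hγ hFR hmom ht hx, ENNReal.toReal_ofReal (by positivity)]

end Telecom

section ModerateDeviations

variable {γ : ℝ} {ρ : ℝ → ℝ}

lemma eventually_pos_of_tendsto_div_rpow
    (hρlow : Tendsto (fun t ↦ ρ t / t ^ (1 / γ)) atTop atTop) : ∀ᶠ t in atTop, 0 < ρ t := by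
  filter_upwards [hρlow.eventually_gt_atTop 0, eventually_gt_atTop 0] with t hρ ht
  exact (div_pos_iff_of_pos_right (Real.rpow_pos_of_pos ht _)).1 hρ

lemma tendsto_mul_rpow_neg (hγ : 0 < γ)
    (hρlow : Tendsto (fun t ↦ ρ t / t ^ (1 / γ)) atTop atTop) :
    Tendsto (fun t ↦ t * ρ t ^ (-γ)) atTop (𝓝 0) := by
  refine ((tendsto_rpow_atTop hγ).comp hρlow).inv_tendsto_atTop.congr' ?_
  filter_upwards [eventually_pos_of_tendsto_div_rpow hρlow, eventually_gt_atTop 0] with t hρ ht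
  simp only [Pi.inv_apply, Function.comp_apply]
  rw [Real.div_rpow hρ.le (by positivity), ← Real.rpow_mul ht.le, one_div_mul_cancel hγ.ne',
    Real.rpow_one, inv_div, Real.rpow_neg hρ.le, div_eq_mul_inv]

variable {FR : Measure ℝ} [SFinite FR]

lemma tendsto_measureReal_muEllR_Ici_mul_div (hγ : 1 < γ) (hFR : FR (Iic 0) = 0)
    (hmom : Integrable (fun r ↦ r ^ γ) FR)
    (hρ0 : ∀ᶠ t in atTop, 0 < ρ t) (hρupp : Tendsto (fun t ↦ ρ t / t) atTop (𝓝 0)) {c : ℝ}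
    (hc : 0 < c) :
    Tendsto (fun t ↦ (muEllR γ t FR).real (Ici (c * ρ t)) / (t * ρ t ^ (-γ))) atTop
      (𝓝 (c ^ (-γ) * ((∫ r, r ^ γ ∂FR) / γ))) := by
  have hz : Tendsto (fun t ↦ c * ρ t / t) atTop (𝓝[>] 0) := by
    refine tendsto_nhdsWithin_iff.2 ⟨?_, ?_⟩
    · simpa [mul_div_assoc] using hρupp.const_mul c
    · filter_upwards [hρ0, eventually_gt_atTop 0] with t hρ ht using div_pos (mul_pos hc hρ) ht
  refine (((tendsto_rewardTailFactor hγ hFR hmom).comp hz).const_mul (c ^ (-γ))).congr' ?_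
  filter_upwards [hρ0, eventually_gt_atTop 0] with t hρ ht
  rw [measureReal_muEllR_Ici hγ hFR hmom ht (mul_pos hc hρ), Real.mul_rpow hc.le hρ.le,
    Function.comp_apply]
  field_simp

theorem tendsto_measureReal_Ici_div_of_isCompensatedPoisson_muEllR {Q : ℝ} (hγ1 : 1 < γ)
    (hγ2 : γ < 2) (hQ : 0 ≤ Q) (hFR : FR (Iic 0) = 0) (hmom : Integrable (fun r ↦ r ^ γ) FR)
    {π : ℝ → Measure ℝ} [∀ t, IsProbabilityMeasure (π t)]
    (hπ : ∀ᶠ t in atTop, IsCompensatedPoisson (ENNReal.ofReal Q • muEllR γ t FR) (π t))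
    (hρlow : Tendsto (fun t ↦ ρ t / t ^ (1 / γ)) atTop atTop)
    (hρupp : Tendsto (fun t ↦ ρ t / t) atTop (𝓝 0)) :
    Tendsto (fun t ↦ (π t).real (Ici (ρ t)) / (t * ρ t ^ (-γ))) atTop
      (𝓝 (Q * (∫ r, r ^ γ ∂FR) / γ)) := by
  have hρ0 := eventually_pos_of_tendsto_div_rpow hρlow
  have hbound : ∀ᶠ t in atTop, PowerTailBound (ENNReal.ofReal Q • muEllR γ t FR) γ
      (Q * ((∫ r, r ^ γ ∂FR) / (γ - 1)) * t) := by
    filter_upwards [eventually_gt_atTop 0] with t ht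
    convert (powerTailBound_muEllR hγ1 hFR hmom ht).smul hQ using 1
    ring
  have htail : ∀ c > 0, Tendsto (fun t ↦
      (ENNReal.ofReal Q • muEllR γ t FR).real (Ici (c * ρ t)) / (t * ρ t ^ (-γ))) atTop
      (𝓝 (Q * (c ^ (-γ) * ((∫ r, r ^ γ ∂FR) / γ)))) := by
    intro c hc
    simp_rw [measureReal_ennreal_smul_apply, ENNReal.toReal_ofReal hQ, mul_div_assoc]
    exact (tendsto_measureReal_muEllR_Ici_mul_div hγ1 hFR hmom hρ0 hρupp hc).const_mul Q
  have hlim := tendsto_measureReal_Ici_div hγ1 hγ2 hπ hbound (eventually_gt_atTop 0) hρ0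
    (tendsto_mul_rpow_neg (one_pos.trans hγ1) hρlow) htail (by fun_prop (disch := simp))
  rwa [Real.one_rpow, one_mul, ← mul_div_assoc] at hlim

end ModerateDeviations

theorem stmt_1_general (γ Q : ℝ) (hγ1 : 1 < γ) (hγ2 : γ < 2) (hQ : 0 ≤ Q)
    (FR : Measure ℝ) [SFinite FR] (hFRpos : FR (Set.Iic 0) = 0)
    (hmom : Integrable (fun r => r ^ γ) FR)
    (Ω : Type*) [MeasurableSpace Ω] (P : Measure Ω) [IsProbabilityMeasure P]
    (Y : ℝ → Ω → ℝ) (hYmeas : ∀ t, AEMeasurable (Y t) P)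
    (hYchar : ∀ t : ℝ, 0 < t → ∀ θ : ℝ,
      ∫ ω, Complex.exp (θ * Y t ω * Complex.I) ∂P
        = Complex.exp (Q * ∫ v, (Complex.exp (θ * v * Complex.I) - 1 - θ * v * Complex.I)
            ∂(muEllR γ t FR)))
    (ρ : ℝ → ℝ) (hρlow : Tendsto (fun t => ρ t / t ^ (1 / γ)) atTop atTop)
    (hρupp : Tendsto (fun t => ρ t / t) atTop (𝓝 0)) :
    Tendsto (fun t => (P {ω | ρ t ≤ Y t ω}).toReal / (t * ρ t ^ (-γ)))
      atTop (𝓝 (Q * (∫ r, r ^ γ ∂FR) / γ)) := by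
  have hprob (t) : IsProbabilityMeasure (P.map (Y t)) :=
    Measure.isProbabilityMeasure_map (hYmeas t)
  have hlaw (t) (ht : 0 < t) :
      IsCompensatedPoisson (ENNReal.ofReal Q • muEllR γ t FR) (P.map (Y t)) := fun θ ↦ by
    rw [charFun_apply_real, integral_map (hYmeas t) (by fun_prop), hYchar t ht,
      integral_smul_measure, ENNReal.toReal_ofReal hQ, Complex.real_smul]
    simp [compensatedExp]
  refine (tendsto_measureReal_Ici_div_of_isCompensatedPoisson_muEllR hγ1 hγ2 hQ hFRpos hmom
    ((eventually_gt_atTop 0).mono hlaw) hρlow hρupp).congr fun t ↦ ?_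
  rw [measureReal_def, Measure.map_apply_of_aemeasurable (hYmeas t) measurableSet_Ici]
  rfl

/-- Moderate large deviations: if `t^{1/γ} ≪ ρ(t) ≪ t`, then
`P(Y_t ≥ ρ(t)) = (Q E[R^γ]/γ) · t · ρ(t)^{-γ} · (1 + o(1))` as `t → ∞`. -/
theorem stmt_1 (γ Q : ℝ) (hγ1 : 1 < γ) (hγ2 : γ < 2) (hQ : 0 < Q)
    (FR : Measure ℝ) [IsProbabilityMeasure FR] (hFRpos : FR (Set.Iic 0) = 0)
    (hmom : Integrable (fun r => r ^ γ) FR)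
    (Ω : Type*) [MeasurableSpace Ω] (P : Measure Ω) [IsProbabilityMeasure P]
    (Y : ℝ → Ω → ℝ) (hYmeas : ∀ t, Measurable (Y t))
    (hYchar : ∀ t : ℝ, 0 < t → ∀ θ : ℝ,
      ∫ ω, Complex.exp (θ * Y t ω * Complex.I) ∂P
        = Complex.exp (Q * ∫ v, (Complex.exp (θ * v * Complex.I) - 1 - θ * v * Complex.I)
            ∂(muEllR γ t FR)))
    (ρ : ℝ → ℝ) (hρpos : ∀ t, 0 < ρ t)
    (hρlow : Tendsto (fun t => ρ t / t ^ (1 / γ)) atTop atTop)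
    (hρupp : Tendsto (fun t => ρ t / t) atTop (𝓝 0)) :
    Tendsto (fun t => (P {ω | ρ t ≤ Y t ω}).toReal / (t * ρ t ^ (-γ)))
      atTop (𝓝 (Q * (∫ r, r ^ γ ∂FR) / γ)) := by
  exact stmt_1_general γ Q hγ1 hγ2 hQ.le FR hFRpos hmom Ω P Y (fun t ↦ (hYmeas t).aemeasurable)
    hYchar ρ hρlow hρupp
end
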